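/- Let L/ℚ be an abelian Galois extension with [L:ℚ] = 2M² for a positive integer M > 1. Then the root discriminant satisfies rd_L > exp((1/4)·log([L:ℚ]/2)) = ([L:ℚ]/2)^{1/4}. -/

import Mathlib

open NumberField

/-!
Write `n = [L : ℚ]`, and for a prime `p` let `v` be the exponent of `p` in the discriminant `d` and
`I` the inertia group of the primes of `L` above `p`, which is independent of the prime since `L/ℚ`
is abelian. As `ℚ` has no proper unramified extension, the inertia groups generate the Galois group,
so `n ≤ ∏ |I|`, and the local bound `|I| ^ n ≤ p ^ (4 * v)` multiplies up to `n ^ n ≤ |d| ^ 4`.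

For the local bound, the tame part of `I` has order at most `p - 1`, and its quotient `J` is a
`p`-group. Considering the ramification breaks of the quotients of `J` of order `p` shows that `J`
is cyclic for `p` odd and generated by two elements for `p = 2`. If `J` is trivial, the tame lower
bound `|I| - 1` for the exponent of the different suffices. Otherwise let `p ^ b` be the exponent of
`J`, so that `|I| ≤ p ^ (2 * b)`. On the fixed field of a subgroup with cyclic quotient of order
`p ^ b`, raising to the `p`-th power pushes elements deep into the ramification filtration, which
forces a different exponent of at least `b * (p - 1) * p ^ (b - 1)` and hence
`b * (p - 1) * n ≤ p * v`. This takes the place of the Kronecker–Weber theorem and the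
conductor-discriminant formula.
-/

namespace AbelianRamification

/-! ### Ramification groups -/

section RamificationGroup

variable {B G : Type*} [CommRing B] [Group G] [MulSemiringAction G B] {P : Ideal B}
  {i j k p : ℕ} {s t : G} {x y : B}

/-- The `i`-th ramification group of `P` in the lower numbering: the elements of `G` acting
trivially on `B ⧸ P ^ (i + 1)`. -/
def ramificationGroup (G : Type*) [Group G] [MulSemiringAction G B] (P : Ideal B) (i : ℕ) :
    Subgroup G :=
  (P ^ (i + 1)).inertia G

lemma ramificationGroup_zero : ramificationGroup G P 0 = P.inertia G := by
  rw [ramificationGroup, zero_add, pow_one]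

lemma ramificationGroup_antitone : Antitone (ramificationGroup G P) :=
  fun _ _ hij _ hs y ↦ Ideal.pow_le_pow_right (Nat.add_le_add_right hij 1) (hs y)

lemma ramificationGroup_le_inertia : ramificationGroup G P i ≤ P.inertia G :=
  ramificationGroup_zero (G := G) (P := P) ▸ ramificationGroup_antitone (Nat.zero_le i)

lemma mul_mem_pow_of_le (hk : k ≤ i + j) (hx : x ∈ P ^ i) (hy : y ∈ P ^ j) : x * y ∈ P ^ k :=
  Ideal.pow_le_pow_right hk (pow_add P i j ▸ Ideal.mul_mem_mul hx hy)

lemma smul_sub_mem_pow (hs : s ∈ ramificationGroup G P i) (hy : y ∈ P ^ k) :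
    s • y - y ∈ P ^ (k + i) := by
  induction k generalizing y with
  | zero => exact Ideal.pow_le_pow_right (by lia) (hs y)
  | succ k ih =>
    rw [pow_succ] at hy
    refine Submodule.mul_induction_on hy (fun b hb a ha ↦ ?_) fun b c hb hc ↦ ?_
    · have leibniz : s • (b * a) - b * a
          = (s • b - b) * (s • a - a) + b * (s • a - a) + (s • b - b) * a := by
        rw [smul_mul']; ring
      rw [leibniz]
      exact add_mem (add_mem (mul_mem_pow_of_le (by lia) (ih hb) (hs a))
        (mul_mem_pow_of_le (by lia) hb (hs a)))
        (mul_mem_pow_of_le (j := 1) (by lia) (ih hb) (by simpa using ha))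
    · have additive : s • (b + c) - (b + c) = (s • b - b) + (s • c - c) := by
        rw [smul_add]; ring
      exact additive ▸ add_mem hb hc

lemma smul_mem_pow (hs : s ∈ ramificationGroup G P i) (hy : y ∈ P ^ k) : s • y ∈ P ^ k := by
  simpa using add_mem (Ideal.pow_le_pow_right (k.le_add_right i) (smul_sub_mem_pow hs hy)) hy

open scoped Pointwise in
lemma stabilizer_smul_mem_pow (ht : t ∈ MulAction.stabilizer G P) (hy : y ∈ P ^ k) :
    t • y ∈ P ^ k := by
  have smul_eq : t • P ^ k = P ^ k := by
    rw [Ideal.pointwise_smul_def, Ideal.map_pow, ← Ideal.pointwise_smul_def,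
      MulAction.mem_stabilizer_iff.mp ht]
  exact smul_eq ▸ Ideal.smul_mem_pointwise_smul t y _ hy

lemma smul_smul_sub_sub_mem (hts : Commute t s) (hx : x ∈ P) {u : B}
    (htu : t • x - u * x ∈ P ^ 2) (hs : s ∈ ramificationGroup G P i) :
    t • (s • x - x) - u * (s • x - x) ∈ P ^ (i + 2) := by
  have difference := smul_sub_mem_pow hs htu
  have coefficient : (s • u - u) * s • x ∈ P ^ (2 + i) :=
    mul_mem_pow_of_le (j := 1) (by lia) (hs u) (smul_mem_pow hs (by simpa using hx))
  rw [add_comm i]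
  convert add_mem difference coefficient using 1
  rw [smul_sub, ← mul_smul, hts.eq, mul_smul, smul_sub, smul_mul']
  ring

lemma pow_smul_sub_sub_mem (hi : 1 ≤ i) (hs : s ∈ ramificationGroup G P i) (m : ℕ) (y : B) :
    s ^ m • y - y - (m : B) * (s • y - y) ∈ P ^ (i + 2) := by
  induction m with
  | zero => simp
  | succ m ih =>
    have second_difference : s • (s ^ m • y - y) - (s ^ m • y - y) ∈ P ^ (i + 2) :=
      Ideal.pow_le_pow_right (by lia) (smul_sub_mem_pow hs (pow_mem hs m y))
    convert add_mem ih second_difference using 1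
    rw [pow_succ', mul_smul, smul_sub]
    push_cast
    ring

lemma smul_pow_sub_sub_mem (hi : 1 ≤ i) (hs : s ∈ ramificationGroup G P i) (hx : x ∈ P) (k : ℕ) :
    s • x ^ (k + 1) - x ^ (k + 1) - (k + 1) * x ^ k * (s • x - x) ∈ P ^ (k + i + 2) := by
  induction k with
  | zero => simp
  | succ k ih =>
    have hsx : s • x ∈ P ^ 1 := smul_mem_pow hs (by simpa using hx)
    have square_mem : (s • x - x) * (s • x - x) ∈ P ^ (i + 3) :=
      mul_mem_pow_of_le (by lia) (hs x) (hs x)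
    have expand : s • x ^ (k + 1 + 1) - x ^ (k + 1 + 1)
          - ((k + 1 : ℕ) + 1) * x ^ (k + 1) * (s • x - x)
        = s • x * (s • x ^ (k + 1) - x ^ (k + 1) - (k + 1) * x ^ k * (s • x - x))
          + (k + 1) * (x ^ k * ((s • x - x) * (s • x - x))) := by
      rw [pow_succ x (k + 1), smul_mul']
      push_cast
      ring
    rw [expand]
    exact add_mem (mul_mem_pow_of_le (by lia) hsx ih)
      (Ideal.mul_mem_left _ _ (mul_mem_pow_of_le (by lia) (Ideal.pow_mem_pow hx k) square_mem))

lemma smul_sub_sub_mem_of_sub_mem (hi : 1 ≤ i) (hs : s ∈ ramificationGroup G P i) (hx : x ∈ P)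
    {c : B} (hy : y - c * x ^ (k + 1) ∈ P ^ (k + 2)) :
    s • y - y - (k + 1) * c * x ^ k * (s • x - x) ∈ P ^ (k + i + 2) := by
  have remainder := smul_sub_mem_pow hs hy
  have coefficient : (s • c - c) * s • x ^ (k + 1) ∈ P ^ (k + i + 2) :=
    mul_mem_pow_of_le (by lia) (hs c) (smul_mem_pow hs (Ideal.pow_mem_pow hx (k + 1)))
  have monomial := Ideal.mul_mem_left _ c (smul_pow_sub_sub_mem hi hs hx k)
  convert add_mem (add_mem (Ideal.pow_le_pow_right (by lia) remainder) coefficient) monomial using 1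
  rw [smul_sub, smul_mul']
  ring

end RamificationGroup

section DifferenceOperator

variable {B G : Type*} [CommRing B] [Group G] [MulSemiringAction G B] {P : Ideal B}
  {i j k e p w : ℕ} {s : G} {y : B}

open Finset

/-- The operator `s - 1` on `B`, in terms of which the partial norms `1 + s + ⋯ + s ^ (p - 1)` are
expanded. -/
def differenceOp (B : Type*) {G : Type*} [CommRing B] [Group G] [MulSemiringAction G B] (s : G) :
    Module.End ℤ B :=
  DistribMulAction.toModuleEnd ℤ B s - 1

lemma differenceOp_apply (s : G) (y : B) : differenceOp B s y = s • y - y := rfl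

lemma differenceOp_pow_mem (hs : s ∈ ramificationGroup G P i) (j : ℕ) (hy : y ∈ P ^ k) :
    (differenceOp B s ^ j) y ∈ P ^ (k + j * i) := by
  induction j with
  | zero => simpa using hy
  | succ j ih =>
    rw [pow_succ', Module.End.mul_apply, differenceOp_apply, add_one_mul, ← add_assoc]
    exact smul_sub_mem_pow hs ih

lemma sum_pow_smul (s : G) (p : ℕ) (y : B) :
    ∑ j ∈ range p, s ^ j • y
      = ∑ j ∈ range p, (p.choose (j + 1) : B) * (differenceOp B s ^ j) y := by
  have binomial := congrArg (fun f ↦ Polynomial.aeval (differenceOp B s) f y)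
    (Polynomial.geom_sum_X_comp_X_add_one_eq_sum (R := ℤ) p)
  have add_one : differenceOp B s + 1 = DistribMulAction.toModuleEnd ℤ B s := sub_add_cancel _ _
  simp only [Polynomial.aeval_comp, map_add, map_sum, map_pow, Polynomial.aeval_X, map_one,
    map_mul, map_natCast, add_one] at binomial
  simp only [← map_pow, LinearMap.sum_apply, Module.End.mul_apply, Module.End.natCast_apply,
    nsmul_eq_mul] at binomial
  exact binomial

lemma sum_pow_smul_smul_sub (s : G) (p : ℕ) (y : B) :
    ∑ j ∈ range p, s ^ j • (s • y - y) = s ^ p • y - y := by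
  simp only [smul_sub, smul_smul, ← pow_succ]
  rw [sum_range_sub (fun j ↦ s ^ j • y), pow_zero, one_smul]

lemma choose_mul_differenceOp_pow_mem (hp : p.Prime) (hpe : (p : B) ∈ P ^ e)
    (hs : s ∈ ramificationGroup G P i) (hy : y ∈ P ^ k) (hj : j < p)
    (hlast : w ≤ k + (p - 1) * i) (hmid : w ≤ k + e + j * i) :
    (p.choose (j + 1) : B) * (differenceOp B s ^ j) y ∈ P ^ w := by
  have op_mem := differenceOp_pow_mem hs j hy
  rcases eq_or_ne (j + 1) p with rfl | hjp
  · exact Ideal.mul_mem_left _ _ (Ideal.pow_le_pow_right (by simpa using hlast) op_mem)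
  · obtain ⟨c, hc⟩ := hp.dvd_choose_self (k := j + 1) (by lia) (by lia)
    rw [hc, Nat.cast_mul, mul_assoc]
    exact mul_mem_pow_of_le (by lia) hpe (Ideal.mul_mem_left _ _ op_mem)

lemma sum_pow_smul_mem_pow (hp : p.Prime) (hpe : (p : B) ∈ P ^ e)
    (hs : s ∈ ramificationGroup G P i) (hy : y ∈ P ^ k) (hlast : w ≤ k + (p - 1) * i)
    (hmid : w ≤ k + e) : ∑ j ∈ range p, s ^ j • y ∈ P ^ w := by
  rw [sum_pow_smul]
  exact sum_mem fun j hj ↦ choose_mul_differenceOp_pow_mem hp hpe hs hy (mem_range.mp hj) hlast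
    (hmid.trans (Nat.le_add_right _ _))

lemma pow_prime_mem_ramificationGroup (hp : p.Prime) (hpe : (p : B) ∈ P ^ e)
    (hs : s ∈ ramificationGroup G P i) (hjp : j ≤ p * i) (hje : j ≤ i + e) :
    s ^ p ∈ ramificationGroup G P j := by
  intro y
  obtain ⟨q, rfl⟩ : ∃ q, p = q + 1 := ⟨p - 1, by have := hp.one_lt; lia⟩
  rw [← sum_pow_smul_smul_sub]
  refine sum_pow_smul_mem_pow hp hpe hs (hs y) ?_ (by lia)
  rw [Nat.add_sub_cancel]
  linarith

end DifferenceOperator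

section PrimePowers

variable {B : Type*} [CommRing B] [IsDedekindDomain B] {P : Ideal B} [hP : P.IsPrime] {i j : ℕ}
  {a b x : B}

lemma mem_pow_or_mem_pow_of_mul_mem_pow (h : a * b ∈ P ^ (i + j + 1)) :
    a ∈ P ^ (i + 1) ∨ b ∈ P ^ (j + 1) := by
  rcases eq_or_ne P ⊥ with rfl | hP0
  · simpa [Ideal.bot_pow] using h
  by_contra! hab
  simp only [← Ideal.dvd_span_singleton, ← emultiplicity_lt_iff_not_dvd] at hab
  rw [← Ideal.dvd_span_singleton, ← Ideal.span_singleton_mul_span_singleton,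
    pow_dvd_iff_le_emultiplicity, emultiplicity_mul (Ideal.prime_of_isPrime hP0 hP)] at h
  obtain ⟨u, hu⟩ := ENat.ne_top_iff_exists.mp hab.1.ne_top
  obtain ⟨v, hv⟩ := ENat.ne_top_iff_exists.mp hab.2.ne_top
  rw [← hu, ← hv] at hab h
  norm_cast at hab h
  lia

lemma pow_notMem_pow_succ (hx : x ∉ P ^ 2) (k : ℕ) : x ^ k ∉ P ^ (k + 1) := by
  induction k with
  | zero => simpa using hP.one_notMem
  | succ k ih =>
    intro h
    rw [pow_succ x k] at h
    exact (mem_pow_or_mem_pow_of_mul_mem_pow (i := k) (j := 1) h).elim ih hx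

lemma exists_sub_mul_mem_pow_succ (hP0 : P ≠ ⊥) (ha : a ∈ P ^ i) (ha' : a ∉ P ^ (i + 1))
    (hb : b ∈ P ^ i) : ∃ c, b - c * a ∈ P ^ (i + 1) := by
  obtain ⟨c, r, hr, h⟩ := Ideal.exists_mul_add_mem_pow_succ hP0 a b ha ha' hb
  exact ⟨c, by rwa [← h, mul_comm, add_sub_cancel_left]⟩

lemma eq_zero_of_forall_mem_pow (h : ∀ n, a ∈ P ^ n) : a = 0 := by
  have := Ideal.iInf_pow_eq_bot_of_isDomain P hP.ne_top
  rwa [← Ideal.mem_bot, ← this, Submodule.mem_iInf]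

end PrimePowers

section Separation

variable {B G : Type*} [CommRing B] [IsDedekindDomain B] [Group G] [MulSemiringAction G B]
  [FaithfulSMul G B] {P : Ideal B} [hP : P.IsPrime] {i e p : ℕ} {s : G}

lemma eq_one_of_forall_mem_ramificationGroup (hs : ∀ n, s ∈ ramificationGroup G P n) : s = 1 := by
  refine eq_of_smul_eq_smul fun y : B ↦ ?_
  rw [one_smul, ← sub_eq_zero]
  exact eq_zero_of_forall_mem_pow fun n ↦ Ideal.pow_le_pow_right n.le_succ (hs n y)

lemma exists_ramificationGroup_eq_bot (P : Ideal B) [P.IsPrime] [Finite G] :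
    ∃ n, ramificationGroup G P n = ⊥ := by
  have (s : G) : ∃ n, s ∈ ramificationGroup G P n → s = 1 := by
    by_contra! h
    exact (h 0).2 (eq_one_of_forall_mem_ramificationGroup fun n ↦ (h n).1)
  choose f hf using this
  obtain ⟨n, hn⟩ := Finite.exists_le f
  exact ⟨n, (Subgroup.eq_bot_iff_forall _).mpr fun s hs ↦
    hf s (ramificationGroup_antitone (hn s) hs)⟩

open Finset in
lemma eq_one_of_pow_prime_eq_one (hp : p.Prime) (hpe : (p : B) ∈ P ^ e)
    (hpe' : (p : B) ∉ P ^ (e + 1)) (hs : s ∈ ramificationGroup G P i) (hlt : e < (p - 1) * i)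
    (hsp : s ^ p = 1) : s = 1 := by
  suffices h : ∀ n (y : B), s • y - y ∈ P ^ n from
    eq_one_of_forall_mem_ramificationGroup fun n y ↦ h (n + 1) y
  intro n y
  induction n with
  | zero => simp
  | succ n ih =>
    have hi : 1 ≤ i := Nat.one_le_iff_ne_zero.mpr fun h ↦ by simp [h] at hlt
    have expansion : ∑ j ∈ range p, (p.choose (j + 1) : B) * (differenceOp B s ^ j) (s • y - y)
        = 0 := by
      rw [← sum_pow_smul, sum_pow_smul_smul_sub, hsp, one_smul, sub_self]
    obtain ⟨q, rfl⟩ : ∃ q, p = q + 1 := ⟨p - 1, by have := hp.one_lt; lia⟩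
    rw [sum_range_succ', zero_add, Nat.choose_one_right, pow_zero, Module.End.one_apply,
      add_eq_zero_iff_neg_eq] at expansion
    have higher_terms : ((q + 1 : ℕ) : B) * (s • y - y) ∈ P ^ (e + n + 1) := by
      rw [← expansion]
      refine neg_mem (sum_mem fun j hj ↦ choose_mul_differenceOp_pow_mem hp hpe hs ih ?_ ?_ ?_)
      · rw [mem_range] at hj; lia
      · lia
      · have := Nat.mul_le_mul (show 1 ≤ j + 1 by lia) hi; lia
    exact (mem_pow_or_mem_pow_of_mul_mem_pow higher_terms).resolve_left hpe'

end Separation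

/-! ### Uniformizers generating the ring over the inertia invariants -/

section Uniformizer

open Polynomial

/-- `x` is a uniformizer at `P` which generates `B` over its inertia invariants after inverting
elements outside `P`. This replaces monogenicity of complete local rings, so that no completion
is needed. -/
structure IsInertialUniformizer (G : Type*) {B : Type*} [CommRing B] [Group G]
    [MulSemiringAction G B] (P : Ideal B) (x : B) : Prop where
  mem : x ∈ P
  notMem_sq : x ∉ P ^ 2
  exists_mul_eq_eval : ∀ y : B, ∃ m ∉ P, ∃ g : B[X], (∀ s ∈ P.inertia G, s • m = m ∧
    g.map (MulSemiringAction.toRingHom G B s) = g) ∧ m * y = g.eval x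

variable {B G : Type*} [CommRing B] [Group G] [MulSemiringAction G B] {P : Ideal B}
  {i j k : ℕ} {s t : G} {x y z z' : B}

lemma smul_eval_of_map_eq {g : B[X]} (hg : g.map (MulSemiringAction.toRingHom G B s) = g) (x : B) :
    s • g.eval x = g.eval (s • x) := by
  have h := eval_map_apply (f := MulSemiringAction.toRingHom G B s) (p := g) x
  rw [hg] at h
  exact h.symm

namespace IsInertialUniformizer

variable (hx : IsInertialUniformizer G P x)
include hx

lemma ne_bot : P ≠ ⊥ := by
  rintro rfl
  exact hx.notMem_sq (by rw [Ideal.mem_bot.mp hx.mem]; exact zero_mem _)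

lemma exists_notMem_sub_dvd (y : B) : ∃ m ∉ P, ∀ s ∈ P.inertia G,
    s • x - x ∣ m * (s • y - y) := by
  obtain ⟨m, hm, g, hg, hy⟩ := hx.exists_mul_eq_eval y
  refine ⟨m, hm, fun s hs ↦ ?_⟩
  have eval_sub : m * (s • y - y) = g.eval (s • x) - g.eval x := by
    rw [← smul_eval_of_map_eq (hg s hs).2 x, ← hy, smul_mul', (hg s hs).1, mul_sub]
  exact eval_sub ▸ sub_dvd_eval_sub _ _ _

lemma mem_pow_one : x ∈ P ^ 1 := by simpa using hx.mem

open scoped Pointwise in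
lemma smul_notMem_sq (ht : t ∈ MulAction.stabilizer G P) : t • x ∉ P ^ 2 := fun h ↦
  hx.notMem_sq (by simpa using stabilizer_smul_mem_pow (inv_mem ht) h)

variable [IsDedekindDomain B] [hP : P.IsPrime]

lemma mem_ramificationGroup_of_smul_sub_mem (hs : s ∈ P.inertia G)
    (h : s • x - x ∈ P ^ (i + 1)) : s ∈ ramificationGroup G P i := by
  intro y
  obtain ⟨m, hm, hdvd⟩ := hx.exists_notMem_sub_dvd y
  exact (Ideal.IsPrime.mul_mem_pow P (Ideal.mem_of_dvd _ (hdvd s hs) h)).resolve_left hm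

lemma smul_injOn_inertia [FaithfulSMul G B] : Set.InjOn (fun s : G ↦ s • x) (P.inertia G) := by
  intro s hs t ht hst
  have fixed : (t⁻¹ * s) • x - x = 0 := by
    rw [mul_smul, show s • x = t • x from hst, inv_smul_smul, sub_self]
  have mem : t⁻¹ * s ∈ P.inertia G := mul_mem (inv_mem ht) hs
  refine inv_mul_eq_one.mp (eq_one_of_forall_mem_ramificationGroup (P := P) fun n ↦
    hx.mem_ramificationGroup_of_smul_sub_mem mem ?_) |>.symm
  rw [fixed]
  exact zero_mem _

lemma prod_X_sub_C_dvd [FaithfulSMul G B] (H : Subgroup G) [Fintype H] (hH : H ≤ P.inertia G)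
    {f : B[X]} (hf : ∀ h ∈ H, f.IsRoot (h • x)) : ∏ h : H, (X - C ((h : G) • x)) ∣ f := by
  rcases eq_or_ne f 0 with rfl | hf0
  · exact dvd_zero _
  have nodup : ((Finset.univ : Finset H).val.map fun h : H ↦ (h : G) • x).Nodup :=
    Finset.univ.nodup.map fun h h' hh ↦
      Subtype.ext (hx.smul_injOn_inertia (hH h.2) (hH h'.2) hh)
  have dvd := (Multiset.prod_X_sub_C_dvd_iff_le_roots hf0 _).mpr
    ((Multiset.le_iff_subset nodup).mpr fun r hr ↦ by
      obtain ⟨h, -, rfl⟩ := Multiset.mem_map.mp hr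
      exact (mem_roots hf0).mpr (hf h h.2))
  rwa [Multiset.map_map] at dvd

-- If `m * y = g(x)`, then `g - m * y` is divisible by `∏ (X - h x)`; now apply `σ` to the
-- coefficients and evaluate at `x`.
lemma smul_sub_mem_pow_sum [FaithfulSMul G B] (H : Subgroup G) [Fintype H]
    (hH : H ≤ P.inertia G) {σ : G} (hσ : σ ∈ P.inertia G) (hy : ∀ h ∈ H, h • y = y)
    (a : H → ℕ) (ha : ∀ h : H, (σ * h) • x - x ∈ P ^ a h) : σ • y - y ∈ P ^ ∑ h, a h := by
  obtain ⟨m, hm, g, hg, hgy⟩ := hx.exists_mul_eq_eval y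
  refine (Ideal.IsPrime.mul_mem_pow P ?_).resolve_left hm
  have conjugates_are_roots : ∀ h ∈ H, (g - C (m * y)).IsRoot (h • x) := fun h hh ↦ by
    rw [IsRoot.def, eval_sub, eval_C, ← smul_eval_of_map_eq (hg h (hH hh)).2 x, ← hgy, smul_mul',
      (hg h (hH hh)).1, hy h hh, sub_self]
  obtain ⟨Q, hQ⟩ := hx.prod_X_sub_C_dvd H hH conjugates_are_roots
  have factor := congrArg (fun f ↦ (f.map (MulSemiringAction.toRingHom G B σ)).eval x) hQ
  simp only [Polynomial.map_sub, Polynomial.map_mul, Polynomial.map_prod, (hg σ hσ).2, map_X,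
    map_C, eval_sub, eval_mul, eval_prod, eval_X, eval_C, MulSemiringAction.toRingHom_apply,
    ← hgy, smul_mul', (hg σ hσ).1] at factor
  have product_formula : m * (σ • y - y) = (∏ h : H, (x - σ • (h : G) • x)) *
      -eval x (Q.map (MulSemiringAction.toRingHom G B σ)) := by
    rw [mul_neg, ← factor]; ring
  rw [product_formula, ← Finset.prod_pow_eq_pow_sum]
  refine Ideal.mul_mem_right _ _ (Ideal.prod_mem_prod fun h _ ↦ ?_)
  rw [← neg_sub, ← mul_smul]
  exact neg_mem (ha h)

end IsInertialUniformizer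

end Uniformizer

/-! ### Consequences of commutativity -/

section Comparison

open scoped Pointwise

/-- The residue classes modulo `P` fixed by the decomposition group are represented by natural
numbers; for a Galois group this says that the residue field of the base is a prime field. -/
def HasPrimeFixedResidueField (G : Type*) {B : Type*} [CommRing B] [Group G]
    [MulSemiringAction G B] (P : Ideal B) : Prop :=
  ∀ c : B, (∀ t ∈ MulAction.stabilizer G P, t • c - c ∈ P) → ∃ m : ℕ, c - (m : B) ∈ P

variable {B G : Type*} [CommRing B] [IsDedekindDomain B] [Group G] [MulSemiringAction G B]
  {P : Ideal B} [hP : P.IsPrime] {i j : ℕ} {s s' t : G} {x u z z' : B}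

-- The ratio `z' / z` is fixed modulo `P` by the decomposition group, because each of its elements
-- scales `z` and `z'` by the same factor `u`.
lemma exists_sub_natCast_mul_mem (hP0 : P ≠ ⊥) (hres : HasPrimeFixedResidueField G P)
    (hz : z ∈ P ^ i) (hz_notMem : z ∉ P ^ (i + 1)) (hz' : z' ∈ P ^ i)
    (hscale : ∀ t ∈ MulAction.stabilizer G P, ∃ u ∉ P, t • z - u * z ∈ P ^ (i + 1) ∧
      t • z' - u * z' ∈ P ^ (i + 1)) : ∃ m : ℕ, z' - (m : B) * z ∈ P ^ (i + 1) := by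
  obtain ⟨c, hc⟩ := exists_sub_mul_mem_pow_succ hP0 hz hz_notMem hz'
  have ratio_fixed : ∀ t ∈ MulAction.stabilizer G P, t • c - c ∈ P := by
    intro t ht
    obtain ⟨u, hu, htz, htz'⟩ := hscale t ht
    have htc := stabilizer_smul_mem_pow ht hc
    rw [smul_sub, smul_mul'] at htc
    have product_mem : u * (t • c - c) * z ∈ P ^ (i + 1) := by
      convert sub_mem (add_mem (sub_mem htz' htc) (Ideal.mul_mem_left _ u hc))
        (Ideal.mul_mem_left _ (t • c) htz) using 1
      ring
    have scaled_mem := (mem_pow_or_mem_pow_of_mul_mem_pow (i := 0) (j := i)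
      (by simpa using product_mem)).resolve_right hz_notMem
    exact (hP.mem_or_mem (by simpa using scaled_mem)).resolve_left hu
  obtain ⟨m, hm⟩ := hres c ratio_fixed
  refine ⟨m, ?_⟩
  convert add_mem hc (mul_mem_pow_of_le (i := 1) (by lia) (by simpa using hm) hz) using 1
  ring

namespace IsInertialUniformizer

variable (hx : IsInertialUniformizer G P x)
include hx

lemma exists_smul_sub_mul_mem (ht : t ∈ MulAction.stabilizer G P) :
    ∃ u ∉ P, t • x - u * x ∈ P ^ 2 := by
  obtain ⟨u, hu⟩ := exists_sub_mul_mem_pow_succ hx.ne_bot hx.mem_pow_one hx.notMem_sq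
    (stabilizer_smul_mem_pow ht hx.mem_pow_one)
  refine ⟨u, fun huP ↦ hx.smul_notMem_sq ht ?_, hu⟩
  rw [← sub_add_cancel (t • x) (u * x)]
  exact add_mem hu (mul_mem_pow_of_le (i := 1) (by lia) (by simpa using huP) hx.mem_pow_one)

lemma exists_smul_sub_sub_mul_pow_mem (hs : s ∈ ramificationGroup G P i)
    (hs' : s ∉ ramificationGroup G P (i + 1)) :
    ∃ a ∉ P, s • x - x - a * x ^ (i + 1) ∈ P ^ (i + 2) := by
  obtain ⟨a, ha⟩ := exists_sub_mul_mem_pow_succ hx.ne_bot (Ideal.pow_mem_pow hx.mem (i + 1))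
    (pow_notMem_pow_succ hx.notMem_sq (i + 1)) (hs x)
  refine ⟨a, fun haP ↦ hs' ?_, ha⟩
  refine hx.mem_ramificationGroup_of_smul_sub_mem (ramificationGroup_le_inertia hs) ?_
  rw [← sub_add_cancel (s • x - x) (a * x ^ (i + 1))]
  exact add_mem ha (mul_mem_pow_of_le (i := 1) (by lia) (by simpa using haP)
    (Ideal.pow_mem_pow hx.mem (i + 1)))

lemma exists_mul_pow_inv_mem_ramificationGroup_succ [IsMulCommutative G]
    (hres : HasPrimeFixedResidueField G P)
    (hi : 1 ≤ i) (hs : s ∈ ramificationGroup G P i) (hs_notMem : s ∉ ramificationGroup G P (i + 1))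
    (hs' : s' ∈ ramificationGroup G P i) :
    ∃ m : ℕ, s' * (s ^ m)⁻¹ ∈ ramificationGroup G P (i + 1) := by
  have hsx : s • x - x ∉ P ^ (i + 1 + 1) := fun h ↦ hs_notMem
    (hx.mem_ramificationGroup_of_smul_sub_mem (ramificationGroup_le_inertia hs) h)
  obtain ⟨m, hm⟩ := exists_sub_natCast_mul_mem hx.ne_bot hres (hs x) hsx (hs' x) fun t ht ↦ by
    obtain ⟨u, hu, htu⟩ := hx.exists_smul_sub_mul_mem ht
    exact ⟨u, hu, smul_smul_sub_sub_mem (mul_comm' t s) hx.mem htu hs,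
      smul_smul_sub_sub_mem (mul_comm' t s') hx.mem htu hs'⟩
  have hinv : (s ^ m)⁻¹ ∈ ramificationGroup G P i := inv_mem (pow_mem hs m)
  refine ⟨m, hx.mem_ramificationGroup_of_smul_sub_mem
    (ramificationGroup_le_inertia (mul_mem hs' hinv)) ?_⟩
  have same_difference : s' • x - s ^ m • x ∈ P ^ (i + 2) := by
    convert sub_mem hm (pow_smul_sub_sub_mem hi hs m x) using 1
    ring
  simpa only [smul_sub, inv_smul_smul, mul_comm' s', mul_smul] using
    smul_mem_pow hinv same_difference

-- With `s x ≡ x + a x ^ (i + 1)` and `t x ≡ x + b x ^ (j + 1)`, comparing `s t x` with `t s x`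
-- gives `(i - j) a b ≡ 0`.
lemma natCast_sub_natCast_mem_of_commute (hst : Commute s t) (hi : 1 ≤ i) (hj : 1 ≤ j)
    (hs : s ∈ ramificationGroup G P i) (hs' : s ∉ ramificationGroup G P (i + 1))
    (ht : t ∈ ramificationGroup G P j) (ht' : t ∉ ramificationGroup G P (j + 1)) :
    (i : B) - j ∈ P := by
  obtain ⟨a, ha, hsa⟩ := hx.exists_smul_sub_sub_mul_pow_mem hs hs'
  obtain ⟨b, hb, htb⟩ := hx.exists_smul_sub_sub_mul_pow_mem ht ht'
  have commutator : s • (t • x - x) - (t • x - x) = t • (s • x - x) - (s • x - x) := by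
    rw [smul_sub, smul_sub, ← mul_smul, ← mul_smul, hst.eq]; ring
  have s_expansion := smul_sub_sub_mem_of_sub_mem hi hs hx.mem htb
  have t_expansion := smul_sub_sub_mem_of_sub_mem hj ht hx.mem hsa
  rw [commutator] at s_expansion
  have s_leading : x ^ j * (s • x - x - a * x ^ (i + 1)) ∈ P ^ (i + j + 2) :=
    mul_mem_pow_of_le (by lia) (Ideal.pow_mem_pow hx.mem j) hsa
  have t_leading : x ^ i * (t • x - x - b * x ^ (j + 1)) ∈ P ^ (i + j + 2) :=
    mul_mem_pow_of_le (by lia) (Ideal.pow_mem_pow hx.mem i) htb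
  rw [add_comm j i] at s_expansion
  have product_mem : ((i : B) - j) * (a * b) * x ^ (i + j + 1) ∈ P ^ (0 + (i + j + 1) + 1) := by
    rw [zero_add]
    convert sub_mem (sub_mem (add_mem s_expansion (Ideal.mul_mem_left _ (((j : B) + 1) * b)
      s_leading)) (Ideal.mul_mem_left _ (((i : B) + 1) * a) t_leading)) t_expansion using 1
    ring
  have coefficient_mem := (mem_pow_or_mem_pow_of_mul_mem_pow product_mem).resolve_right
    (pow_notMem_pow_succ hx.notMem_sq _)
  rw [zero_add, pow_one] at coefficient_mem
  exact (hP.mem_or_mem coefficient_mem).resolve_right fun h ↦ (hP.mem_or_mem h).elim ha hb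

lemma exists_smul_sub_natCast_mul_mem [IsMulCommutative G] (hres : HasPrimeFixedResidueField G P)
    (hs : s ∈ P.inertia G) : ∃ m : ℕ, s • x - (m : B) * x ∈ P ^ 2 := by
  rw [← ramificationGroup_zero] at hs
  refine exists_sub_natCast_mul_mem hx.ne_bot hres hx.mem_pow_one hx.notMem_sq
    (smul_mem_pow hs hx.mem_pow_one) fun t ht ↦ ?_
  obtain ⟨u, hu, htu⟩ := hx.exists_smul_sub_mul_mem ht
  refine ⟨u, hu, htu, ?_⟩
  convert add_mem (smul_smul_sub_sub_mem (mul_comm' t s) hx.mem htu hs) htu using 1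
  rw [smul_sub]; ring

end IsInertialUniformizer

end Comparison

/-! ### Tame and wild inertia -/

section Wild

variable {B G : Type*} [CommRing B] [Group G] [MulSemiringAction G B] {P : Ideal B} {p : ℕ} {s : G}

lemma pow_prime_pow_mem_ramificationGroup (hp : p.Prime) (hpP : (p : B) ∈ P)
    (hs : s ∈ ramificationGroup G P 1) (k : ℕ) : s ^ p ^ k ∈ ramificationGroup G P (k + 1) := by
  induction k with
  | zero => simpa using hs
  | succ k ih =>
    have := Nat.mul_le_mul_right (k + 1) hp.two_le
    rw [pow_succ p k, pow_mul]
    exact pow_prime_mem_ramificationGroup (e := 1) hp (by simpa using hpP) ih (by lia) (by lia)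

lemma natCast_sub_natCast_mem_iff [P.IsPrime] (hp : p.Prime) (hpP : (p : B) ∈ P) (m n : ℕ) :
    (m : B) - n ∈ P ↔ (m : ZMod p) = n := by
  have : CharP (B ⧸ P) p := (CharP.charP_iff_prime_eq_zero hp).mpr
    (by simpa using Ideal.Quotient.eq_zero_iff_mem.mpr hpP)
  rw [ZMod.natCast_eq_natCast_iff, ← CharP.natCast_eq_natCast (B ⧸ P) p, ← sub_eq_zero,
    ← Ideal.Quotient.eq_zero_iff_mem]
  simp

open scoped Pointwise in
lemma smul_smul_sub_mul_mem {t : G} {x : B} {m n k : ℕ} (hs : s ∈ MulAction.stabilizer G P)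
    (hsx : s • x - (m : B) * x ∈ P ^ k) (htx : t • x - (n : B) * x ∈ P ^ k) :
    s • t • x - (m : B) * n * x ∈ P ^ k := by
  have smul_natCast : s • (n : B) = n := map_natCast (MulSemiringAction.toRingHom G B s) n
  convert add_mem (stabilizer_smul_mem_pow hs htx) (Ideal.mul_mem_left _ (n : B) hsx) using 1
  rw [smul_sub, smul_mul', smul_natCast]
  ring

variable [IsDedekindDomain B] [FaithfulSMul G B] [P.IsPrime] [Finite G]

lemma isPGroup_ramificationGroup_one (hp : p.Prime) (hpP : (p : B) ∈ P) :
    IsPGroup p (ramificationGroup G P 1) := by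
  obtain ⟨n, hn⟩ := exists_ramificationGroup_eq_bot (G := G) P
  refine fun s ↦ ⟨n, Subtype.ext ?_⟩
  rw [Subgroup.coe_one, ← Subgroup.mem_bot, ← hn]
  exact ramificationGroup_antitone n.le_succ (pow_prime_pow_mem_ramificationGroup hp hpP s.2 n)

lemma eq_one_of_pow_prime_sub_one_eq_one (hp : p.Prime) (hpP : (p : B) ∈ P)
    (hs : s ∈ ramificationGroup G P 1) (hs' : s ^ (p - 1) = 1) : s = 1 := by
  have := Fact.mk hp
  obtain ⟨k, hk⟩ := isPGroup_ramificationGroup_one hp hpP ⟨s, hs⟩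
  refine orderOf_eq_one_iff.mp (Nat.eq_one_of_dvd_coprimes (Nat.Coprime.pow_left k ?_)
    (orderOf_dvd_of_pow_eq_one (congrArg Subtype.val hk)) (orderOf_dvd_of_pow_eq_one hs'))
  exact (Nat.coprime_self_sub_right hp.one_le).mpr (Nat.coprime_one_right p)

end Wild

section Tame

open scoped IsMulCommutative

variable {B G : Type*} [CommRing B] [IsDedekindDomain B] [Group G] [MulSemiringAction G B]
  [IsMulCommutative G] {P : Ideal B} [P.IsPrime] {x : B} {p : ℕ} {s : G}

/-- The elements of the inertia group of order dividing `p - 1`; for a commutative Galois group over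
`ℚ` this is a complement of the wild inertia group. -/
def tameInertia (G : Type*) [Group G] [MulSemiringAction G B] [IsMulCommutative G] (P : Ideal B)
    (p : ℕ) : Subgroup G :=
  P.inertia G ⊓ (powMonoidHom (p - 1)).ker

omit [IsDedekindDomain B] [P.IsPrime] in
lemma mem_tameInertia : s ∈ tameInertia G P p ↔ s ∈ P.inertia G ∧ s ^ (p - 1) = 1 := Iff.rfl

namespace IsInertialUniformizer

omit [IsMulCommutative G] in
lemma natCast_zmod_eq (hx : IsInertialUniformizer G P x) (hp : p.Prime) (hpP : (p : B) ∈ P)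
    {m n : ℕ} (hm : s • x - (m : B) * x ∈ P ^ 2) (hn : s • x - (n : B) * x ∈ P ^ 2) :
    (m : ZMod p) = n := by
  rw [← natCast_sub_natCast_mem_iff hp hpP]
  have product_mem : ((m : B) - n) * x ∈ P ^ 2 := by
    convert sub_mem hn hm using 1; ring
  have factor_mem := (mem_pow_or_mem_pow_of_mul_mem_pow (i := 0) (j := 1)
    product_mem).resolve_right hx.notMem_sq
  rwa [zero_add, pow_one] at factor_mem

variable (hx : IsInertialUniformizer G P x) (hres : HasPrimeFixedResidueField G P) (hp : p.Prime)
  (hpP : (p : B) ∈ P)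
include hx hres hp hpP

lemma exists_tameCharacter : ∃ θ : P.inertia G →* (ZMod p)ˣ,
    ∀ s, θ s = 1 → (s : G) ∈ ramificationGroup G P 1 := by
  choose m hm using fun s : P.inertia G ↦ hx.exists_smul_sub_natCast_mul_mem hres s.2
  let θ : P.inertia G →* ZMod p :=
    { toFun s := m s
      map_one' := by
        rw [← Nat.cast_one]
        exact hx.natCast_zmod_eq hp hpP (hm 1) (by simp)
      map_mul' s t := by
        rw [← Nat.cast_mul]
        refine hx.natCast_zmod_eq hp hpP (hm (s * t)) ?_
        rw [Subgroup.coe_mul, mul_smul, Nat.cast_mul]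
        exact smul_smul_sub_mul_mem (P.inertia_le_stabilizer s.2) (hm s) (hm t) }
  refine ⟨θ.toHomUnits, fun s hs ↦ hx.mem_ramificationGroup_of_smul_sub_mem s.2 ?_⟩
  have ratio_mem : (m s : B) - (1 : ℕ) ∈ P := by
    rw [natCast_sub_natCast_mem_iff hp hpP]
    exact (congrArg Units.val hs).trans Nat.cast_one.symm
  convert add_mem (hm s) (mul_mem_pow_of_le (i := 1) (by lia) (by simpa using ratio_mem)
    hx.mem_pow_one) using 1
  ring

lemma pow_prime_sub_one_mem_ramificationGroup_one (hs : s ∈ P.inertia G) :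
    s ^ (p - 1) ∈ ramificationGroup G P 1 := by
  have := Fact.mk hp
  obtain ⟨θ, hθ⟩ := hx.exists_tameCharacter hres hp hpP
  exact hθ (⟨s, hs⟩ ^ (p - 1)) (by rw [map_pow, ZMod.units_pow_card_sub_one_eq_one])

lemma inertia_le_ramificationGroup_one_of_isPGroup (hI : IsPGroup p (P.inertia G)) :
    P.inertia G ≤ ramificationGroup G P 1 := by
  intro s hs
  obtain ⟨k, hk⟩ := hI ⟨s, hs⟩
  have coprime : Nat.Coprime (p - 1) (p ^ k) :=
    ((Nat.coprime_self_sub_left hp.one_le).mpr (Nat.coprime_one_left p)).pow_right k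
  obtain ⟨m, hm⟩ := exists_pow_eq_self_of_coprime (x := s)
    (coprime.coprime_dvd_right (orderOf_dvd_of_pow_eq_one (congrArg Subtype.val hk)))
  rw [← hm]
  exact pow_mem (hx.pow_prime_sub_one_mem_ramificationGroup_one hres hp hpP hs) m

variable [FaithfulSMul G B] [Finite G]

lemma card_tameInertia_le : Nat.card (tameInertia G P p) ≤ p - 1 := by
  have := Fact.mk hp
  obtain ⟨θ, hθ⟩ := hx.exists_tameCharacter hres hp hpP
  have injective : Function.Injective (θ.comp (Subgroup.inclusion inf_le_left :
      tameInertia G P p →* P.inertia G)) := by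
    refine (injective_iff_map_eq_one _).mpr fun s hs ↦ Subtype.ext ?_
    exact eq_one_of_pow_prime_sub_one_eq_one hp hpP (hθ _ hs) (mem_tameInertia.mp s.2).2
  calc Nat.card (tameInertia G P p) ≤ Nat.card (ZMod p)ˣ :=
        Nat.card_le_card_of_injective _ injective
    _ = p - 1 := by rw [Nat.card_eq_fintype_card, ZMod.card_units]

lemma exists_pow_mem_tameInertia (hs : s ∈ P.inertia G) : ∃ k, s ^ p ^ k ∈ tameInertia G P p := by
  obtain ⟨k, hk⟩ := isPGroup_ramificationGroup_one hp hpP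
    ⟨_, hx.pow_prime_sub_one_mem_ramificationGroup_one hres hp hpP hs⟩
  refine ⟨k, mem_tameInertia.mpr ⟨pow_mem hs _, ?_⟩⟩
  rw [← pow_mul, mul_comm, pow_mul]
  exact congrArg Subtype.val hk

end IsInertialUniformizer

end Tame

/-! ### Finite abelian groups -/

section FiniteGroup

variable {G : Type*} [Group G] [Finite G] {I J N S : Subgroup G} {p : ℕ}

lemma exists_le_le_card_mul_prime_eq (hp : p.Prime) (hI : IsPGroup p I) (hN : N < I) :
    ∃ H : Subgroup G, N ≤ H ∧ H ≤ I ∧ Nat.card H * p = Nat.card I := by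
  have := Fact.mk hp
  obtain ⟨a, ha⟩ := IsPGroup.iff_card.mp hI
  obtain ⟨n, hna, hn⟩ := (Nat.dvd_prime_pow hp).mp (ha ▸ Subgroup.card_dvd_of_le hN.le)
  have hlt : n < a := by
    refine hna.lt_of_ne ?_
    rintro rfl
    exact hN.ne (Subgroup.eq_of_le_of_card_ge hN.le (by rw [ha, hn]))
  have card_subgroupOf : Nat.card (N.subgroupOf I) = p ^ n := by
    rw [Nat.card_congr (Subgroup.subgroupOfEquivOfLe hN.le).toEquiv, hn]
  obtain ⟨K, hK, hNK⟩ := Sylow.exists_subgroup_card_pow_prime_le p (n := n) (m := a - 1)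
    (ha ▸ pow_dvd_pow p (Nat.sub_le a 1)) (N.subgroupOf I) card_subgroupOf (by lia)
  refine ⟨K.map I.subtype, fun s hs ↦ ⟨⟨s, hN.le hs⟩, hNK hs, rfl⟩, Subgroup.map_subtype_le K, ?_⟩
  rw [Subgroup.card_map_of_injective I.subtype_injective, hK, ha, ← pow_succ,
    Nat.sub_add_cancel (by lia)]

-- Subgroups of index `p` contain the Frattini subgroup, so `J` may be dropped from generators.
lemma le_of_le_sup_of_forall_card_mul_prime_eq (hp : p.Prime) (hI : IsPGroup p I) (hS : S ≤ I)
    (hJ : ∀ H ≤ I, Nat.card H * p = Nat.card I → J ≤ H) (h : I ≤ S ⊔ J) : I ≤ S := by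
  by_contra hIS
  obtain ⟨H, hSH, hHI, hcard⟩ := exists_le_le_card_mul_prime_eq hp hI (lt_of_le_not_ge hS hIS)
  obtain rfl : H = I := le_antisymm hHI (h.trans (sup_le hSH (hJ H hHI hcard)))
  exact hp.ne_one (Nat.mul_eq_left Nat.card_pos.ne' |>.mp hcard)

lemma card_mul_relIndex_of_le {G : Type*} [Group G] {H K : Subgroup G} (h : H ≤ K) :
    Nat.card H * H.relIndex K = Nat.card K := by
  rw [← Subgroup.relIndex_bot_left H, Subgroup.relIndex_mul_relIndex _ _ _ bot_le h,
    Subgroup.relIndex_bot_left]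

end FiniteGroup

section FiniteCommGroup

open scoped IsMulCommutative

lemma exists_character_card_range_eq_exponent (A : Type*) [CommGroup A] [Finite A] :
    ∃ χ : A →* ℂˣ, Nat.card χ.range = Monoid.exponent A := by
  have : NeZero (Monoid.exponent A) := ⟨Monoid.exponent_ne_zero_of_finite⟩
  obtain ⟨dual⟩ := CommGroup.monoidHom_mulEquiv_of_hasEnoughRootsOfUnity A ℂ
  obtain ⟨g, hg⟩ := Monoid.exists_orderOf_eq_exponent (G := A) .of_finite
  refine ⟨dual.symm g, ?_⟩
  have : Finite (dual.symm g).range := Finite.of_surjective _ (dual.symm g).rangeRestrict_surjective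
  have cyclic : IsCyclic (dual.symm g).range := isCyclic_subgroup_units _
  rw [← IsCyclic.exponent_eq_card, ← hg, ← dual.symm.orderOf_eq g]
  refine dvd_antisymm (Monoid.exponent_dvd_iff_forall_pow_eq_one.mpr ?_)
    (orderOf_dvd_of_pow_eq_one (MonoidHom.ext fun a ↦ ?_))
  · rintro ⟨_, a, rfl⟩
    exact Subtype.ext (DFunLike.congr_fun (pow_orderOf_eq_one (dual.symm g)) a)
  · exact congrArg Subtype.val
      (Monoid.pow_exponent_eq_one (⟨dual.symm g a, a, rfl⟩ : (dual.symm g).range))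

variable {G : Type*} [Group G] [IsMulCommutative G] {I S T : Subgroup G} {s t : G}

lemma exists_le_sup_zpowers_relIndex_eq_exponent [Finite G] (I : Subgroup G) :
    ∃ N ≤ I, ∃ g : G, I ≤ N ⊔ Subgroup.zpowers g ∧ N.relIndex I = Monoid.exponent I := by
  obtain ⟨χ, hχ⟩ := exists_character_card_range_eq_exponent I
  have : Finite χ.range := Finite.of_surjective _ χ.rangeRestrict_surjective
  have cyclic : IsCyclic χ.range := isCyclic_subgroup_units _
  obtain ⟨⟨_, g, rfl⟩, hg⟩ := cyclic.exists_generator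
  refine ⟨χ.ker.map I.subtype, Subgroup.map_subtype_le _, g, fun u hu ↦ ?_, ?_⟩
  · obtain ⟨k, hk⟩ := hg ⟨χ ⟨u, hu⟩, _, rfl⟩
    have ratio_mem : ⟨u, hu⟩ * (g ^ k)⁻¹ ∈ χ.ker := by
      rw [MonoidHom.mem_ker, map_mul, map_inv, map_zpow, mul_inv_eq_one]
      exact (congrArg Subtype.val hk).symm
    convert Subgroup.mul_mem_sup (Subgroup.mem_map_of_mem I.subtype ratio_mem)
      (Subgroup.zpow_mem_zpowers (g : G) k) using 1
    simp
  · rw [← hχ, ← Subgroup.index_ker, Subgroup.relIndex, Subgroup.subgroupOf,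
      Subgroup.comap_map_eq_self_of_injective I.subtype_injective]

lemma card_le_card_mul_card_of_le_sup [Finite S] [Finite T] (h : I ≤ S ⊔ T) :
    Nat.card I ≤ Nat.card S * Nat.card T := by
  rw [← Nat.card_prod]
  choose f hf using fun u : I ↦ (show ∃ y : S × T, (y.1 : G) * y.2 = u by
    obtain ⟨y, hy, z, hz, hyz⟩ := Subgroup.mem_sup.mp (h u.2)
    exact ⟨⟨⟨y, hy⟩, ⟨z, hz⟩⟩, hyz⟩)
  exact Nat.card_le_card_of_injective f fun u v huv ↦ Subtype.ext (by rw [← hf, ← hf, huv])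

lemma card_le_exponent_sq_of_le_zpowers_sup_zpowers [Finite G] (hs : s ∈ I) (ht : t ∈ I)
    (hst : I ≤ Subgroup.zpowers s ⊔ Subgroup.zpowers t) :
    Nat.card I ≤ Monoid.exponent I ^ 2 := by
  have card_zpowers_le : ∀ u ∈ I, Nat.card (Subgroup.zpowers u) ≤ Monoid.exponent I := by
    intro u hu
    rw [Nat.card_zpowers]
    exact Nat.le_of_dvd (Nat.pos_of_ne_zero Monoid.exponent_ne_zero_of_finite)
      (Subgroup.orderOf_mk u hu ▸ Monoid.order_dvd_exponent (⟨u, hu⟩ : I))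
  rw [sq]
  exact (card_le_card_mul_card_of_le_sup hst).trans
    (Nat.mul_le_mul (card_zpowers_le s hs) (card_zpowers_le t ht))

end FiniteCommGroup

/-! ### Generators of the inertia group -/

section Generators

/-- Every quotient `I ⧸ H` of order `p` of the inertia group `I` of `P` has its ramification break
at most `c`. An element `y` fixed by `H` stands for an element of the fixed ring of `H`, over which
`P` has ramification index `Nat.card H`. -/
def HasPrimeQuotientBreaksLE (G : Type*) {B : Type*} [CommRing B] [Group G] [MulSemiringAction G B]
    (P : Ideal B) (p c : ℕ) : Prop :=
  ∀ H ≤ P.inertia G, Nat.card H * p = Nat.card (P.inertia G) → ∀ σ ∈ P.inertia G, σ ∉ H →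
    ∃ y : B, (∀ h ∈ H, h • y = y) ∧ σ • y - y ∉ P ^ ((c + 1) * Nat.card H + 1)

namespace IsInertialUniformizer

variable {B G : Type*} [CommRing B] [IsDedekindDomain B] [Group G] [MulSemiringAction G B]
  {P : Ideal B} [hP : P.IsPrime] {x : B} {p c i : ℕ} {H : Subgroup G} {σ : G}
  (hx : IsInertialUniformizer G P x)
include hx

section Commutative

variable [IsMulCommutative G]

lemma exists_ramificationGroup_le_sup_zpowers (hres : HasPrimeFixedResidueField G P)
    (hi : 1 ≤ i) : ∃ s ∈ ramificationGroup G P i,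
      ramificationGroup G P i ≤ ramificationGroup G P (i + 1) ⊔ Subgroup.zpowers s := by
  by_cases hle : ramificationGroup G P i ≤ ramificationGroup G P (i + 1)
  · exact ⟨1, one_mem _, hle.trans le_sup_left⟩
  obtain ⟨s, hs, hs'⟩ := SetLike.not_le_iff_exists.mp hle
  refine ⟨s, hs, fun t ht ↦ ?_⟩
  obtain ⟨m, hm⟩ := hx.exists_mul_pow_inv_mem_ramificationGroup_succ hres hi hs hs' ht
  simpa using Subgroup.mul_mem_sup hm (Subgroup.npow_mem_zpowers s m)

lemma relIndex_ramificationGroup_succ_le (hres : HasPrimeFixedResidueField G P) (hp : p.Prime)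
    (hpP : (p : B) ∈ P) (hi : 1 ≤ i) :
    (ramificationGroup G P (i + 1)).relIndex (ramificationGroup G P i) ≤ p := by
  obtain ⟨s, hs, hle⟩ := hx.exists_ramificationGroup_le_sup_zpowers hres hi
  set quotientMap := QuotientGroup.mk' (ramificationGroup G P (i + 1))
  have hsp : quotientMap s ^ p = 1 := by
    rw [← map_pow, ← MonoidHom.mem_ker, QuotientGroup.ker_mk']
    exact pow_prime_mem_ramificationGroup (e := 1) hp (by simpa using hpP) hs
      (by nlinarith [hp.two_le]) le_rfl
  have hmap : (ramificationGroup G P i).map quotientMap ≤ Subgroup.zpowers (quotientMap s) := by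
    refine (Subgroup.map_mono hle).trans ?_
    rw [Subgroup.map_sup, QuotientGroup.map_mk'_self, bot_sup_eq, MonoidHom.map_zpowers]
  have : Finite (Subgroup.zpowers (quotientMap s)) :=
    finite_zpowers.mpr (isOfFinOrder_iff_pow_eq_one.mpr ⟨p, hp.pos, hsp⟩)
  rw [← QuotientGroup.ker_mk' (ramificationGroup G P (i + 1)), Subgroup.relIndex_ker]
  exact (Subgroup.card_le_of_le hmap).trans
    (Nat.card_zpowers (quotientMap s) ▸ orderOf_le_of_pow_eq_one hp.pos hsp)

-- Two distinct breaks are congruent modulo `P`, so `1` and `2` are not both breaks.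
lemma ramificationGroup_two_le_three (h : ¬ ramificationGroup G P 1 ≤ ramificationGroup G P 2) :
    ramificationGroup G P 2 ≤ ramificationGroup G P 3 := by
  obtain ⟨s, hs, hs'⟩ := SetLike.not_le_iff_exists.mp h
  intro t ht
  by_contra ht'
  have sub_mem := hx.natCast_sub_natCast_mem_of_commute (mul_comm' s t) le_rfl one_le_two hs hs'
    ht ht'
  refine hP.ne_top ((Ideal.eq_top_iff_one P).mpr ?_)
  convert neg_mem sub_mem using 1
  norm_num

end Commutative

variable [FaithfulSMul G B]

lemma sum_le_of_hasPrimeQuotientBreaksLE (hbreaks : HasPrimeQuotientBreaksLE G P p c)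
    (hH : H ≤ P.inertia G) (hcard : Nat.card H * p = Nat.card (P.inertia G))
    (hσ : σ ∈ P.inertia G) (hσH : σ ∉ H) [Fintype H] (a : H → ℕ)
    (ha : ∀ h : H, σ * h ∈ ramificationGroup G P (a h)) : ∑ h, a h ≤ c * Nat.card H := by
  obtain ⟨y, hy, hy'⟩ := hbreaks H hH hcard σ hσ hσH
  have sum_lt : ∑ h, (a h + 1) < (c + 1) * Nat.card H + 1 := by
    by_contra! hle
    exact hy' (Ideal.pow_le_pow_right hle
      (hx.smul_sub_mem_pow_sum H hH hσ hy (fun h ↦ a h + 1) fun h ↦ ha h x))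
  simp only [Finset.sum_add_distrib, Finset.sum_const, Finset.card_univ, smul_eq_mul, mul_one,
    Nat.card_eq_fintype_card] at sum_lt ⊢
  lia

variable [Finite G]

lemma ramificationGroup_succ_le_of_hasPrimeQuotientBreaksLE
    (hbreaks : HasPrimeQuotientBreaksLE G P p c) (hI : P.inertia G ≤ ramificationGroup G P c)
    (hH : H ≤ P.inertia G) (hcard : Nat.card H * p = Nat.card (P.inertia G)) :
    ramificationGroup G P (c + 1) ≤ H := by
  classical
  intro σ hσ
  by_contra hσH
  have := Fintype.ofFinite H
  have hσI := ramificationGroup_le_inertia hσ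
  have sum_le := hx.sum_le_of_hasPrimeQuotientBreaksLE hbreaks hH hcard hσI hσH
    (fun h ↦ c + if h = 1 then 1 else 0) fun h ↦ by
      split_ifs with h1
      · simpa [h1] using hσ
      · exact hI (mul_mem hσI (hH h.2))
  simp [Finset.sum_add_distrib, mul_comm] at sum_le

variable [IsMulCommutative G] (hres : HasPrimeFixedResidueField G P)
include hres

lemma isCyclic_inertia_of_hasPrimeQuotientBreaksLE (hp : p.Prime)
    (hI : IsPGroup p (P.inertia G))
    (hbreaks : HasPrimeQuotientBreaksLE G P p c) (hc : 1 ≤ c)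
    (hle : P.inertia G ≤ ramificationGroup G P c) : IsCyclic (P.inertia G) := by
  obtain ⟨s, hs, hsup⟩ := hx.exists_ramificationGroup_le_sup_zpowers hres hc
  have hsI : Subgroup.zpowers s ≤ P.inertia G :=
    Subgroup.zpowers_le.mpr (ramificationGroup_le_inertia hs)
  have hgen : P.inertia G ≤ Subgroup.zpowers s :=
    le_of_le_sup_of_forall_card_mul_prime_eq hp hI hsI
      (fun _ ↦ hx.ramificationGroup_succ_le_of_hasPrimeQuotientBreaksLE hbreaks hle)
      (hle.trans (hsup.trans (sup_comm _ _).le))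
  exact Subgroup.isCyclic_of_le hgen

lemma ramificationGroup_four_le_of_hasPrimeQuotientBreaksLE_two (h2P : ((2 : ℕ) : B) ∈ P)
    (hbreaks : HasPrimeQuotientBreaksLE G P 2 2) (hle : P.inertia G ≤ ramificationGroup G P 1)
    (hnle : ¬ P.inertia G ≤ ramificationGroup G P 2) (hH : H ≤ P.inertia G)
    (hcard : Nat.card H * 2 = Nat.card (P.inertia G)) : ramificationGroup G P 4 ≤ H := by
  classical
  have h23 : ramificationGroup G P 2 ≤ ramificationGroup G P 3 :=
    hx.ramificationGroup_two_le_three fun h ↦ hnle (hle.trans h)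
  intro σ hσ
  by_contra hσH
  have := Fintype.ofFinite H
  have hσI := ramificationGroup_le_inertia hσ
  have sum_le := hx.sum_le_of_hasPrimeQuotientBreaksLE hbreaks hH hcard hσI hσH
    (fun h ↦ 1 + (if (h : G) ∈ ramificationGroup G P 2 then 2 else 0) + if h = 1 then 1 else 0)
    fun h ↦ by
      split_ifs with h2 h1 h1
      · simpa [h1] using hσ
      · exact mul_mem (ramificationGroup_antitone (by lia) hσ) (h23 h2)
      · simp [h1] at h2
      · exact hle (mul_mem hσI (hH h.2))
  have relIndex_le : (ramificationGroup G P 2).relIndex H ≤ 2 :=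
    (Subgroup.relIndex_le_of_le_right (hH.trans hle)
      Subgroup.index_ne_zero_of_finite).trans
      (hx.relIndex_ramificationGroup_succ_le hres Nat.prime_two h2P le_rfl)
  have card_le : Nat.card H ≤ 2 * Nat.card ((ramificationGroup G P 2).subgroupOf H) := by
    rw [← Subgroup.card_mul_index ((ramificationGroup G P 2).subgroupOf H), mul_comm]
    exact Nat.mul_le_mul_right _ relIndex_le
  have sum_eq : ∑ h : H, (if (h : G) ∈ ramificationGroup G P 2 then 2 else 0) =
      2 * Nat.card ((ramificationGroup G P 2).subgroupOf H) := by
    rw [← Finset.sum_filter, Finset.sum_const, smul_eq_mul, mul_comm, Nat.card_eq_fintype_card,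
      Fintype.card_subtype]
    rfl
  simp only [Finset.sum_add_distrib, sum_eq, Finset.sum_const, Finset.card_univ, smul_eq_mul,
    mul_one, Finset.sum_ite_eq', Finset.mem_univ, ↓reduceIte, ← Nat.card_eq_fintype_card] at sum_le
  lia

lemma card_inertia_le_exponent_sq_of_hasPrimeQuotientBreaksLE_two (h2P : ((2 : ℕ) : B) ∈ P)
    (hI : IsPGroup 2 (P.inertia G)) (hbreaks : HasPrimeQuotientBreaksLE G P 2 2) :
    Nat.card (P.inertia G) ≤ Monoid.exponent (P.inertia G) ^ 2 := by
  have hle := hx.inertia_le_ramificationGroup_one_of_isPGroup hres Nat.prime_two h2P hI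
  by_cases hle2 : P.inertia G ≤ ramificationGroup G P 2
  · have := hx.isCyclic_inertia_of_hasPrimeQuotientBreaksLE hres Nat.prime_two hI hbreaks
      one_le_two hle2
    rw [IsCyclic.exponent_eq_card]
    exact Nat.le_self_pow two_ne_zero _
  obtain ⟨s, hs, hs_sup⟩ := hx.exists_ramificationGroup_le_sup_zpowers hres le_rfl
  obtain ⟨t, ht, ht_sup⟩ := hx.exists_ramificationGroup_le_sup_zpowers (i := 3) hres (by lia)
  have hsI := ramificationGroup_le_inertia hs
  have htI := ramificationGroup_le_inertia ht
  have h23 := hx.ramificationGroup_two_le_three fun h ↦ hle2 (hle.trans h)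
  refine card_le_exponent_sq_of_le_zpowers_sup_zpowers hsI htI ?_
  refine le_of_le_sup_of_forall_card_mul_prime_eq (J := ramificationGroup G P 4) Nat.prime_two hI
    (sup_le (Subgroup.zpowers_le.mpr hsI) (Subgroup.zpowers_le.mpr htI))
    (fun _ ↦ hx.ramificationGroup_four_le_of_hasPrimeQuotientBreaksLE_two hres h2P hbreaks hle hle2)
    ?_
  calc P.inertia G ≤ ramificationGroup G P 2 ⊔ Subgroup.zpowers s := hle.trans hs_sup
    _ ≤ (ramificationGroup G P 4 ⊔ Subgroup.zpowers t) ⊔ Subgroup.zpowers s :=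
        sup_le_sup_right (h23.trans ht_sup) _
    _ = Subgroup.zpowers s ⊔ Subgroup.zpowers t ⊔ ramificationGroup G P 4 := by
        ac_rfl

end IsInertialUniformizer

end Generators

/-! ### Local monogenicity over the inertia subring -/

section Monogenicity

open Polynomial
open scoped Pointwise

attribute [local instance] Ideal.Quotient.field in
lemma exists_sub_algebraMap_mem {A B G : Type*} [CommRing A] [CommRing B] [Algebra A B] [Group G]
    [Finite G] [MulSemiringAction G B] [IsGaloisGroup G A B] [Module.Finite A B] (P : Ideal B)
    (q : Ideal A) [P.LiesOver q] [P.IsMaximal] [q.IsMaximal] [Finite (A ⧸ q)] (c : B)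
    (hc : ∀ t ∈ MulAction.stabilizer G P, t • c - c ∈ P) : ∃ a : A, c - algebraMap A B a ∈ P := by
  have := Ideal.Quotient.normal (A := A) (B := B) G q P
  have : IsGalois (A ⧸ q) (B ⧸ P) := ⟨⟩
  have mem_range : Ideal.Quotient.mk P c ∈ Set.range (algebraMap (A ⧸ q) (B ⧸ P)) := by
    rw [IsGalois.mem_range_algebraMap_iff_fixed]
    intro f
    obtain ⟨t, rfl⟩ := Ideal.Quotient.stabilizerHom_surjective G q P f
    exact Ideal.Quotient.eq.mpr (hc t t.2)
  obtain ⟨a, ha⟩ := mem_range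
  obtain ⟨a, rfl⟩ := Ideal.Quotient.mk_surjective a
  exact ⟨a, Ideal.Quotient.eq.mp ha.symm⟩

lemma exists_pow_le_map_of_forall_smul_eq {A B G : Type*} [CommRing A] [CommRing B]
    [IsNoetherianRing B] [Algebra A B] [Group G] [Finite G] [MulSemiringAction G B]
    [IsGaloisGroup G A B] (P : Ideal B) (q : Ideal A) [P.LiesOver q] [P.IsPrime] [q.IsMaximal]
    (hP : ∀ g : G, g • P = P) : ∃ k, P ^ k ≤ q.map (algebraMap A B) := by
  have le_radical : P ≤ (q.map (algebraMap A B)).radical := by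
    rw [Ideal.radical_eq_sInf]
    refine le_sInf fun J ⟨hqJ, _⟩ ↦ ?_
    have : J.LiesOver q := ⟨Ideal.IsMaximal.eq_of_le inferInstance
      (Ideal.IsPrime.under A J).ne_top (Ideal.map_le_iff_le_comap.mp hqJ)⟩
    obtain ⟨σ, hσ⟩ := Ideal.exists_smul_eq_of_isGaloisGroup q P J G
    exact ((hP σ).symm.trans hσ).le
  obtain ⟨n, hn⟩ := (q.map (algebraMap A B)).exists_radical_pow_le_of_fg
    (IsNoetherian.noetherian _)
  exact ⟨n, (Ideal.pow_right_mono le_radical n).trans hn⟩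

-- The expansion of `y` in powers of the uniformizer `x`, one digit per step.
lemma exists_sub_aeval_mem_pow {A B : Type*} [CommRing A] [CommRing B] [IsDedekindDomain B]
    [Algebra A B] {P : Ideal B} [P.IsPrime] (hP0 : P ≠ ⊥) {x : B} (hx : x ∈ P) (hx2 : x ∉ P ^ 2)
    (hres : ∀ c : B, ∃ a : A, c - algebraMap A B a ∈ P) (y : B) (k : ℕ) :
    ∃ g : A[X], y - aeval x g ∈ P ^ k := by
  induction k with
  | zero => exact ⟨0, by simp⟩
  | succ k ih =>
    obtain ⟨g, hg⟩ := ih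
    obtain ⟨c, hc⟩ := exists_sub_mul_mem_pow_succ hP0 (Ideal.pow_mem_pow hx k)
      (pow_notMem_pow_succ hx2 k) hg
    obtain ⟨a, ha⟩ := hres c
    refine ⟨g + C a * X ^ k, ?_⟩
    convert add_mem hc (mul_mem_pow_of_le (i := 1) (by lia) (by simpa using ha)
      (Ideal.pow_mem_pow hx k)) using 1
    simp only [map_add, map_mul, aeval_C, map_pow, aeval_X]
    ring

lemma exists_sub_one_mem_and_smul_mem {A M : Type*} [CommRing A] [AddCommGroup M] [Module A M]
    [Module.Finite A M] {q : Ideal A} {S : Submodule A M} (h : S ⊔ q • (⊤ : Submodule A M) = ⊤) :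
    ∃ r : A, r - 1 ∈ q ∧ ∀ y : M, r • y ∈ S := by
  have quotient_le : (⊤ : Submodule A (M ⧸ S)) ≤ q • ⊤ := by
    have map_top := congrArg (Submodule.map S.mkQ) h
    rw [Submodule.map_sup, S.mkQ_map_self, bot_sup_eq, Submodule.map_smul'', Submodule.map_top,
      S.range_mkQ] at map_top
    exact map_top.ge
  obtain ⟨r, hr, hrS⟩ := Submodule.exists_sub_one_mem_and_smul_eq_zero_of_fg_of_le_smul q _
    Module.Finite.fg_top quotient_le
  exact ⟨r, hr, fun y ↦ (Submodule.Quotient.mk_eq_zero S).mp (hrS (S.mkQ y) trivial)⟩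

variable {A B G : Type*} [CommRing A] [CommRing B] [IsDedekindDomain B] [Algebra A B]
  [Module.Finite A B] [Group G] [Finite G] [MulSemiringAction G B]

lemma exists_sub_one_mem_and_smul_eq_aeval (P : Ideal B) [IsGaloisGroup (P.inertia G) A B]
    (q : Ideal A) [P.LiesOver q] [P.IsMaximal] [q.IsMaximal] [Finite (A ⧸ q)] (hP0 : P ≠ ⊥)
    {x : B} (hx : x ∈ P) (hx2 : x ∉ P ^ 2) :
    ∃ r : A, r - 1 ∈ q ∧ ∀ y, ∃ g : A[X], r • y = aeval x g := by
  obtain ⟨k, hk⟩ := exists_pow_le_map_of_forall_smul_eq (G := P.inertia G) P q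
    fun g ↦ P.inertia_le_stabilizer g.2
  have adjoin_sup : Subalgebra.toSubmodule (aeval (R := A) x).range ⊔ q • ⊤ = ⊤ := by
    refine eq_top_iff.mpr fun y _ ↦ ?_
    obtain ⟨g, hg⟩ := exists_sub_aeval_mem_pow hP0 hx hx2
      (fun c ↦ exists_sub_algebraMap_mem (G := P.inertia G) P q c fun t _ ↦ t.2 c) y k
    have remainder_mem : y - aeval x g ∈ q • (⊤ : Submodule A B) := by
      rw [Ideal.smul_top_eq_map]
      exact hk hg
    rw [← add_sub_cancel (aeval x g) y]
    exact Submodule.add_mem_sup ⟨g, rfl⟩ remainder_mem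
  obtain ⟨r, hr, hr'⟩ := exists_sub_one_mem_and_smul_mem adjoin_sup
  exact ⟨r, hr, fun y ↦ (hr' y).imp fun _ ↦ Eq.symm⟩

lemma isInertialUniformizer_of_isGaloisGroup_inertia (P : Ideal B)
    [IsGaloisGroup (P.inertia G) A B] (q : Ideal A) [P.LiesOver q] [P.IsMaximal] [q.IsMaximal]
    [Finite (A ⧸ q)] (hP0 : P ≠ ⊥) {x : B} (hx : x ∈ P) (hx2 : x ∉ P ^ 2) :
    IsInertialUniformizer G P x where
  mem := hx
  notMem_sq := hx2
  exists_mul_eq_eval y := by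
    obtain ⟨r, hr, hr'⟩ := exists_sub_one_mem_and_smul_eq_aeval (G := G) P q hP0 hx hx2
    obtain ⟨g, hg⟩ := hr' y
    refine ⟨algebraMap A B r, fun hrP ↦ ?_, g.map (algebraMap A B), fun s hs ↦ ?_, ?_⟩
    · have hrq : r ∈ q := by rwa [P.over_def q]
      refine Ideal.IsMaximal.ne_top (I := q) inferInstance ((Ideal.eq_top_iff_one q).mpr ?_)
      simpa using sub_mem hrq hr
    · have fixed (a : A) : s • algebraMap A B a = algebraMap A B a :=
        smul_algebraMap (⟨s, hs⟩ : P.inertia G) a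
      exact ⟨fixed r, by rw [Polynomial.map_map]; congr 1; ext a; exact fixed a⟩
    · rw [← Algebra.smul_def, hg, eval_map_algebraMap]

end Monogenicity

/-! ### Galois number fields -/

section GaloisNumberField

attribute [local instance] Int.ideal_span_isMaximal_of_prime

lemma span_natCast_ne_bot (p : ℕ) [hp : Fact p.Prime] : Ideal.span {(p : ℤ)} ≠ ⊥ := by
  simpa using hp.out.ne_zero

lemma natCast_mem_of_liesOver {B : Type*} [CommRing B] (P : Ideal B) (p : ℕ)
    [P.LiesOver (Ideal.span {(p : ℤ)})] : (p : B) ∈ P := by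
  have mem_under : (p : ℤ) ∈ P.under ℤ := by
    rw [← P.over_def (Ideal.span {(p : ℤ)})]
    exact Ideal.mem_span_singleton_self _
  simpa using mem_under

section

variable {L : Type*} [Field L] [NumberField L] (P : Ideal (𝓞 L)) (p : ℕ) [Fact p.Prime]
  [P.LiesOver (Ideal.span {(p : ℤ)})]

include p in
lemma ne_bot_of_liesOver : P ≠ ⊥ := Ideal.ne_bot_of_liesOver_of_ne_bot (span_natCast_ne_bot p) P

variable [P.IsMaximal] [IsGalois ℚ L]

include p in
lemma card_inertia_eq_ramificationIdx : Nat.card (P.inertia Gal(L/ℚ)) = P.ramificationIdx ℤ := by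
  rw [Ideal.card_inertia_eq_ramificationIdxIn (Ideal.span {(p : ℤ)}) P,
    Ideal.ramificationIdxIn_eq_ramificationIdx (Ideal.span {(p : ℤ)}) P Gal(L/ℚ)]

lemma natCast_mem_pow_iff (k : ℕ) :
    (p : 𝓞 L) ∈ P ^ k ↔ k ≤ Nat.card (P.inertia Gal(L/ℚ)) := by
  have map_span : (Ideal.span {(p : ℤ)}).map (algebraMap ℤ (𝓞 L)) = Ideal.span {(p : 𝓞 L)} := by
    simp [Ideal.map_span]
  have ne_bot : Ideal.span {(p : 𝓞 L)} ≠ ⊥ := by simpa using (Fact.out : p.Prime).ne_zero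
  rw [card_inertia_eq_ramificationIdx P p,
    Ideal.IsDedekindDomain.ramificationIdx_eq_multiplicity (Ideal.span {(p : ℤ)}) P
      (map_span ▸ ne_bot), map_span, ← Ideal.dvd_span_singleton]
  exact (FiniteMultiplicity.of_prime_left (Ideal.prime_of_isPrime (ne_bot_of_liesOver P p)
    inferInstance) ne_bot).pow_dvd_iff_le_multiplicity

include p in
lemma hasPrimeFixedResidueField_of_liesOver : HasPrimeFixedResidueField Gal(L/ℚ) P := by
  intro c hc
  have : Finite (ℤ ⧸ Ideal.span {(p : ℤ)}) :=
    Ideal.finiteQuotientOfFreeOfNeBot _ (span_natCast_ne_bot p)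
  obtain ⟨a, ha⟩ := exists_sub_algebraMap_mem (G := Gal(L/ℚ)) P (Ideal.span {(p : ℤ)}) c hc
  obtain ⟨m, hm⟩ := ZMod.natCast_zmod_surjective (a : ZMod p)
  obtain ⟨d, hd⟩ : (p : ℤ) ∣ a - m := by
    rw [← ZMod.intCast_zmod_eq_zero_iff_dvd]
    simp [hm]
  refine ⟨m, ?_⟩
  have hd' : (a : 𝓞 L) - m = p * d := by exact_mod_cast congrArg (Int.cast : ℤ → 𝓞 L) hd
  convert add_mem ha (Ideal.mul_mem_right (d : 𝓞 L) _ (natCast_mem_of_liesOver P p)) using 1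
  rw [← hd', eq_intCast]
  ring

end

variable {L : Type*} [Field L] [NumberField L] [IsGalois ℚ L]

instance faithfulSMul_ringOfIntegers : FaithfulSMul Gal(L/ℚ) (𝓞 L) :=
  IsGaloisGroup.faithful (A := ℤ)

instance isGaloisGroup_ringOfIntegers_fixedField (N : Subgroup Gal(L/ℚ)) :
    IsGaloisGroup N (𝓞 (IntermediateField.fixedField N)) (𝓞 L) := by
  have : IsGaloisGroup N (IntermediateField.fixedField N) L :=
    IsGaloisGroup.subgroup Gal(L/ℚ) ℚ L N
  have : SMulDistribClass N (𝓞 L) L := ⟨fun g x y ↦ smul_distrib_smul (g : Gal(L/ℚ)) x y⟩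
  exact IsGaloisGroup.of_isFractionRing N (𝓞 (IntermediateField.fixedField N)) (𝓞 L)
    (IntermediateField.fixedField N) L

lemma exists_isInertialUniformizer {P : Ideal (𝓞 L)} [P.IsMaximal] (hP0 : P ≠ ⊥) :
    ∃ x, IsInertialUniformizer Gal(L/ℚ) P x := by
  obtain ⟨x, hx, hx2⟩ : ∃ x ∈ P, x ∉ P ^ 2 :=
    SetLike.exists_of_lt (by simpa using Ideal.pow_succ_lt_pow hP0 1)
  let inertiaField := IntermediateField.fixedField (P.inertia Gal(L/ℚ))
  have : (P.under (𝓞 inertiaField)).IsMaximal := Ideal.IsMaximal.under _ P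
  have : Finite (𝓞 inertiaField ⧸ P.under (𝓞 inertiaField)) :=
    Ideal.finiteQuotientOfFreeOfNeBot _ (Ideal.under_ne_bot _ hP0)
  exact ⟨x, isInertialUniformizer_of_isGaloisGroup_inertia (A := 𝓞 inertiaField) P
    (P.under (𝓞 inertiaField)) hP0 hx hx2⟩

end GaloisNumberField

section Valuation

variable {A B : Type*} [CommRing A] [IsDedekindDomain A] [CommRing B] [IsDedekindDomain B]
  [Algebra A B] [FaithfulSMul A B] [Algebra.IsIntegral A B] {P : Ideal B} [P.IsPrime]

lemma emultiplicity_map_eq_ramificationIdx_mul (hP0 : P ≠ ⊥) {J : Ideal A} (hJ : J ≠ ⊥) :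
    emultiplicity P (J.map (algebraMap A B)) =
      P.ramificationIdx A * emultiplicity (P.under A) J := by
  have under_ne_bot : P.under A ≠ ⊥ := Ideal.under_ne_bot A hP0
  rw [Ideal.IsDedekindDomain.emultiplicity_map_eq_ramificationIdx'_mul (v := P.under A) hJ
      (Ideal.prime_of_isPrime under_ne_bot inferInstance).irreducible
      (Ideal.prime_of_isPrime hP0 inferInstance).irreducible hP0,
    Ideal.ramificationIdx'_eq_ramificationIdx _ _ under_ne_bot]

lemma pow_mul_ramificationIdx_dvd_map (hP0 : P ≠ ⊥) {J : Ideal A} {k : ℕ}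
    (h : P.under A ^ k ∣ J) : P ^ (k * P.ramificationIdx A) ∣ J.map (algebraMap A B) := by
  rcases eq_or_ne J ⊥ with rfl | hJ
  · simp
  rw [pow_dvd_iff_le_emultiplicity] at h ⊢
  rw [emultiplicity_map_eq_ramificationIdx_mul hP0 hJ, mul_comm]
  push_cast
  gcongr

lemma mem_under_pow_succ_of_algebraMap_mem_pow (hP0 : P ≠ ⊥) {z : A} {k : ℕ}
    (h : algebraMap A B z ∈ P ^ (k * P.ramificationIdx A + 1)) : z ∈ P.under A ^ (k + 1) := by
  rcases eq_or_ne z 0 with rfl | hz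
  · exact zero_mem _
  have map_span : (Ideal.span {z}).map (algebraMap A B) = Ideal.span {algebraMap A B z} := by
    simp [Ideal.map_span]
  rw [← Ideal.dvd_span_singleton, ← map_span, pow_dvd_iff_le_emultiplicity,
    emultiplicity_map_eq_ramificationIdx_mul hP0 (by simpa using hz)] at h
  rw [← Ideal.dvd_span_singleton, pow_dvd_iff_le_emultiplicity]
  by_contra! hlt
  have le_k : emultiplicity (P.under A) (Ideal.span {z}) ≤ k := ENat.lt_natCast_add_one_iff.mp hlt
  have : (↑(k * P.ramificationIdx A + 1) : ℕ∞) ≤ ↑(P.ramificationIdx A * k) := by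
    push_cast at h ⊢
    exact h.trans (by gcongr)
  have : k * P.ramificationIdx A + 1 ≤ P.ramificationIdx A * k := by exact_mod_cast this
  linarith

end Valuation

section FixedField

open IntermediateField

variable {L : Type*} [Field L] [NumberField L]

-- Mathlib's instance is for `IntermediateField.algebra'`, which agrees with the canonical
-- `ℚ`-algebra structure of a field of characteristic zero only up to unfolding.
instance isAbelianGalois_intermediateField [IsAbelianGalois ℚ L] (K : IntermediateField ℚ L) :
    IsAbelianGalois ℚ K :=
  IsAbelianGalois.tower_bot ℚ K L

section

variable (K : IntermediateField ℚ L) [Normal ℚ K]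

lemma algebraMap_restrictNormalHom_smul (s : Gal(L/ℚ)) (z : 𝓞 K) :
    algebraMap (𝓞 K) (𝓞 L) (AlgEquiv.restrictNormalHom K s • z) =
      s • algebraMap (𝓞 K) (𝓞 L) z :=
  RingOfIntegers.ext (AlgEquiv.restrictNormal_commutes s K (z : K))

lemma map_restrictNormalHom_inertia_le (P : Ideal (𝓞 L)) :
    (P.inertia Gal(L/ℚ)).map (AlgEquiv.restrictNormalHom K) ≤
      (P.under (𝓞 K)).inertia Gal(K/ℚ) := by
  rintro _ ⟨s, hs, rfl⟩ z
  change algebraMap (𝓞 K) (𝓞 L) _ ∈ P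
  rw [map_sub, algebraMap_restrictNormalHom_smul]
  exact hs _

end

lemma restrictNormalHom_fixedField_ker (N : Subgroup Gal(L/ℚ)) [inst : Normal ℚ (fixedField N)] :
    (AlgEquiv.restrictNormalHom (F := ℚ) (K₁ := L) (fixedField N)).ker = N :=
  (@restrictNormalHom_ker _ _ _ _ _ (fixedField N) inst).trans (fixingSubgroup_fixedField N)

variable [IsGalois ℚ L]

lemma smul_algebraMap_ringOfIntegers_fixedField {N : Subgroup Gal(L/ℚ)} {s : Gal(L/ℚ)}
    (hs : s ∈ N) (z : 𝓞 (fixedField N)) :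
    s • algebraMap (𝓞 (fixedField N)) (𝓞 L) z = algebraMap (𝓞 (fixedField N)) (𝓞 L) z :=
  have := (isGaloisGroup_ringOfIntegers_fixedField N).commutes
  smul_algebraMap (⟨s, hs⟩ : N) z

variable {N : Subgroup Gal(L/ℚ)} {P : Ideal (𝓞 L)} [P.IsMaximal]

lemma ramificationIdx_fixedField_eq_card (hN : N ≤ P.inertia Gal(L/ℚ)) :
    P.ramificationIdx (𝓞 (fixedField N)) = Nat.card N := by
  have : (P.under (𝓞 (fixedField N))).IsMaximal := Ideal.IsMaximal.under _ P
  have inertia_eq_top : P.inertia N = ⊤ := eq_top_iff.mpr fun s _ y ↦ hN s.2 y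
  rw [← Ideal.ramificationIdxIn_eq_ramificationIdx (P.under (𝓞 (fixedField N))) P N,
    ← Ideal.card_inertia_eq_ramificationIdxIn (G := N) _ P, inertia_eq_top, Subgroup.card_top]

variable [IsGalois ℚ (fixedField N)]
variable (p : ℕ) [Fact p.Prime] [P.LiesOver (Ideal.span {(p : ℤ)})]

include p in
lemma card_inertia_fixedField_mul_card (hN : N ≤ P.inertia Gal(L/ℚ)) :
    Nat.card ((P.under (𝓞 (fixedField N))).inertia Gal(fixedField N/ℚ)) * Nat.card N =
      Nat.card (P.inertia Gal(L/ℚ)) := by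
  have : (P.under (𝓞 (fixedField N))).IsMaximal := Ideal.IsMaximal.under _ P
  have : (P.under (𝓞 (fixedField N))).LiesOver (Ideal.span {(p : ℤ)}) :=
    Ideal.LiesOver.tower_bot P _ _
  rw [← ramificationIdx_fixedField_eq_card hN,
    card_inertia_eq_ramificationIdx P p, card_inertia_eq_ramificationIdx _ p]
  exact (Ideal.ramificationIdx_tower _ _).symm

include p in
lemma map_restrictNormalHom_inertia_eq (hN : N ≤ P.inertia Gal(L/ℚ)) :
    (P.inertia Gal(L/ℚ)).map (AlgEquiv.restrictNormalHom (fixedField N)) =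
      (P.under (𝓞 (fixedField N))).inertia Gal(fixedField N/ℚ) := by
  refine Subgroup.eq_of_le_of_card_ge (map_restrictNormalHom_inertia_le _ P) ?_
  refine Nat.le_of_mul_le_mul_right (c := Nat.card N) (le_of_eq ?_) Nat.card_pos
  rw [card_inertia_fixedField_mul_card p hN, ← Subgroup.relIndex_ker,
    restrictNormalHom_fixedField_ker, mul_comm, card_mul_relIndex_of_le hN]

end FixedField

/-! ### The different of a cyclic extension -/

section Different

open nonZeroDivisors in
lemma differentIdeal_le_map_of_intTrace_mem (A K L : Type*) {B : Type*} [CommRing A]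
    [IsDedekindDomain A] [CommRing B] [IsDedekindDomain B] [Algebra A B] [Module.Finite A B]
    [Module.IsTorsionFree A B] [Field K] [Field L] [Algebra A K] [IsFractionRing A K] [Algebra B L]
    [IsFractionRing B L] [Algebra A L] [Algebra K L] [IsScalarTower A K L] [IsScalarTower A B L]
    [FiniteDimensional K L] [Algebra.IsSeparable K L] {J : Ideal A} (hJ : J ≠ ⊥)
    (h : ∀ x : B, Algebra.intTrace A B x ∈ J) :
    differentIdeal A B ≤ J.map (algebraMap A B) := by
  have map_ne_bot : J.map (algebraMap A B) ≠ ⊥ := Ideal.map_ne_bot_of_ne_bot hJ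
  rw [differentialIdeal_le_iff (K := K) (L := L) map_ne_bot]
  rintro _ ⟨x, hx, rfl⟩
  let N : Submodule A K := Submodule.map (Algebra.linearMap A K) J
  have N_ne_bot : N ≠ ⊥ :=
    (Submodule.map_injective_of_injective (FaithfulSMul.algebraMap_injective A K)).ne_iff'
      (Submodule.map_bot _) |>.mpr hJ
  have smul_mem : ∀ y ∈ N, Algebra.trace K L x • y ∈ N := by
    rintro _ ⟨y, hy, rfl⟩
    obtain ⟨z, hz⟩ : ∃ z : B, algebraMap B L z = x * algebraMap B L (algebraMap A B y) :=
      (FractionalIdeal.mem_one_iff _).mp <| (FractionalIdeal.mem_inv_iff (by simpa)).mp hx _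
        (FractionalIdeal.mem_coeIdeal_of_mem _ (Ideal.mem_map_of_mem _ hy))
    refine ⟨Algebra.intTrace A B z, h z, ?_⟩
    rw [Algebra.linearMap_apply, Algebra.algebraMap_intTrace (A := A) (K := K) (L := L), hz,
      ← IsScalarTower.algebraMap_apply A B L, IsScalarTower.algebraMap_apply A K L, mul_comm,
      ← Algebra.smul_def, map_smul, smul_eq_mul, smul_eq_mul, Algebra.linearMap_apply, mul_comm]
  have integral : IsIntegral A (Algebra.trace K L x) :=
    isIntegral_of_smul_mem_submodule N N_ne_bot ((IsNoetherian.noetherian J).map _) _ smul_mem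
  rw [Submodule.mem_one]
  exact IsIntegrallyClosed.isIntegral_iff.mp integral

lemma sum_zpowers_smul_eq {G B : Type*} [Group G] [AddCommMonoid B] [SMul G B] (h : G) [Finite G]
    [Fintype (Subgroup.zpowers h)] (x : B) :
    ∑ s : Subgroup.zpowers h, (s : G) • x = ∑ j ∈ Finset.range (orderOf h), h ^ j • x := by
  rw [← Equiv.sum_comp (finEquivZPowers (isOfFinOrder_of_finite h)), Finset.sum_range]
  rfl

variable {L : Type*} [Field L] [NumberField L] [IsGalois ℚ L]

lemma algebraMap_intTrace_fixedField (N : Subgroup Gal(L/ℚ)) [Fintype N] (x : 𝓞 L) :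
    algebraMap (𝓞 (IntermediateField.fixedField N)) (𝓞 L)
      (Algebra.intTrace (𝓞 (IntermediateField.fixedField N)) (𝓞 L) x) =
      ∑ s : N, (s : Gal(L/ℚ)) • x := by
  set K := IntermediateField.fixedField N
  have : IsGaloisGroup N K L := IsGaloisGroup.subgroup Gal(L/ℚ) ℚ L N
  have : IsGalois K L := IsGaloisGroup.isGalois N K L
  apply FaithfulSMul.algebraMap_injective (𝓞 L) L
  rw [← IsScalarTower.algebraMap_apply, IsScalarTower.algebraMap_apply (𝓞 K) K L,
    Algebra.algebraMap_intTrace (A := 𝓞 K) (K := K) (L := L), trace_eq_sum_automorphisms, map_sum,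
    ← Equiv.sum_comp (IsGaloisGroup.mulEquivAlgEquiv N K L).toEquiv]
  rfl

variable (P : Ideal (𝓞 L)) [P.IsMaximal] (p : ℕ) [Fact p.Prime]
  [P.LiesOver (Ideal.span {(p : ℤ)})]

include p in
lemma pow_card_inertia_sub_one_dvd_differentIdeal :
    P ^ (Nat.card (P.inertia Gal(L/ℚ)) - 1) ∣ differentIdeal ℤ (𝓞 L) := by
  refine pow_sub_one_dvd_differentIdeal ℤ P (p := Ideal.span {(p : ℤ)}) _
    (span_natCast_ne_bot p) ?_
  rw [Ideal.map_span, Set.image_singleton, Ideal.dvd_span_singleton]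
  simpa using (natCast_mem_pow_iff P p _).mpr le_rfl

lemma pow_dvd_differentIdeal_fixedField_zpowers {h : Gal(L/ℚ)} {i k : ℕ}
    (hh : h ∈ ramificationGroup Gal(L/ℚ) P i) (hord : orderOf h = p) (hki : k * p < (p - 1) * i)
    (hkI : k * p < Nat.card (P.inertia Gal(L/ℚ))) :
    P ^ ((k + 1) * p) ∣
      differentIdeal (𝓞 (IntermediateField.fixedField (Subgroup.zpowers h))) (𝓞 L) := by
  have hP0 := ne_bot_of_liesOver P p
  have hN : Subgroup.zpowers h ≤ P.inertia Gal(L/ℚ) :=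
    Subgroup.zpowers_le.mpr (ramificationGroup_le_inertia hh)
  have idx_eq : P.ramificationIdx (𝓞 (IntermediateField.fixedField (Subgroup.zpowers h))) = p := by
    rw [ramificationIdx_fixedField_eq_card hN, Nat.card_zpowers, hord]
  set K := IntermediateField.fixedField (Subgroup.zpowers h)
  have trace_mem (y : 𝓞 L) : Algebra.intTrace (𝓞 K) (𝓞 L) y ∈ P.under (𝓞 K) ^ (k + 1) := by
    have := Fintype.ofFinite (Subgroup.zpowers h)
    refine mem_under_pow_succ_of_algebraMap_mem_pow hP0 ?_
    rw [algebraMap_intTrace_fixedField, sum_zpowers_smul_eq, hord, idx_eq]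
    exact sum_pow_smul_mem_pow Fact.out ((natCast_mem_pow_iff P p _).mpr le_rfl) hh
      (k := 0) (by simp) (by lia) (by lia)
  have map_dvd : (P.under (𝓞 K) ^ (k + 1)).map (algebraMap (𝓞 K) (𝓞 L)) ∣
      differentIdeal (𝓞 K) (𝓞 L) :=
    Ideal.dvd_iff_le.mpr <| differentIdeal_le_map_of_intTrace_mem (𝓞 K) K L
      (pow_ne_zero _ (Ideal.under_ne_bot _ hP0)) trace_mem
  exact idx_eq ▸ (pow_mul_ramificationIdx_dvd_map hP0 dvd_rfl).trans map_dvd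

end Different

section CyclicInertia

open IntermediateField

lemma pow_prime_pow_mem_ramificationGroup_prime_pow {B G : Type*} [CommRing B] [Group G]
    [MulSemiringAction G B] {P : Ideal B} {p e : ℕ} {s : G} (hp : p.Prime) (hpe : (p : B) ∈ P ^ e)
    (hs : s ∈ ramificationGroup G P 1) {j : ℕ} (hj : p ^ j ≤ e) :
    s ^ p ^ j ∈ ramificationGroup G P (p ^ j) := by
  induction j with
  | zero => simpa using hs
  | succ j ih =>
    have := Nat.pow_le_pow_right hp.pos j.le_succ
    rw [pow_succ p j, pow_mul] at *
    exact pow_prime_mem_ramificationGroup hp hpe (ih (by lia)) (mul_comm _ _).le (by lia)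

lemma orderOf_pow_prime_pow {G : Type*} [Group G] {g : G} {p b : ℕ} (hp : p.Prime)
    (hg : orderOf g = p ^ (b + 1)) : orderOf (g ^ p ^ b) = p := by
  rw [orderOf_pow_of_dvd (pow_ne_zero _ hp.ne_zero) (hg ▸ pow_dvd_pow p b.le_succ), hg,
    Nat.pow_div b.le_succ hp.pos]
  simp

universe u

variable {p : ℕ} [hp : Fact p.Prime]

lemma inertia_le_ramificationGroup_one {L : Type*} [Field L] [NumberField L] [IsAbelianGalois ℚ L]
    {P : Ideal (𝓞 L)} [P.IsMaximal] [P.LiesOver (Ideal.span {(p : ℤ)})]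
    (hI : IsPGroup p (P.inertia Gal(L/ℚ))) :
    P.inertia Gal(L/ℚ) ≤ ramificationGroup Gal(L/ℚ) P 1 := by
  obtain ⟨x, hx⟩ := exists_isInertialUniformizer (ne_bot_of_liesOver P p)
  exact hx.inertia_le_ramificationGroup_one_of_isPGroup
    (hasPrimeFixedResidueField_of_liesOver P p) hp.out (natCast_mem_of_liesOver P p) hI

lemma exists_pow_dvd_differentIdeal_fixedField_of_isCyclic_inertia {L : Type*} [Field L]
    [NumberField L] [IsAbelianGalois ℚ L] {P : Ideal (𝓞 L)} [P.IsMaximal]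
    [P.LiesOver (Ideal.span {(p : ℤ)})] (hcyc : IsCyclic (P.inertia Gal(L/ℚ))) {b : ℕ}
    (hcard : Nat.card (P.inertia Gal(L/ℚ)) = p ^ (b + 2)) :
    ∃ N ≤ P.inertia Gal(L/ℚ), Nat.card N = p ∧
      P ^ ((p - 1) * p ^ (b + 1)) ∣ differentIdeal (𝓞 (fixedField N)) (𝓞 L) := by
  obtain ⟨g, hg⟩ := (Subgroup.isCyclic_iff_exists_zpowers_eq_top _).mp hcyc
  have g_mem : g ∈ P.inertia Gal(L/ℚ) := hg ▸ Subgroup.mem_zpowers g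
  have orderOf_eq : orderOf (g ^ p ^ (b + 1)) = p :=
    orderOf_pow_prime_pow hp.out (by rw [← Nat.card_zpowers, hg, hcard])
  have pow_mem : g ^ p ^ (b + 1) ∈ ramificationGroup Gal(L/ℚ) P (p ^ (b + 1)) :=
    pow_prime_pow_mem_ramificationGroup_prime_pow hp.out
      ((natCast_mem_pow_iff P p _).mpr le_rfl)
      (inertia_le_ramificationGroup_one (IsPGroup.of_card hcard) g_mem)
      (hcard ▸ Nat.pow_le_pow_right hp.out.pos (by lia))
  refine ⟨Subgroup.zpowers (g ^ p ^ (b + 1)), ?_, by rw [Nat.card_zpowers, orderOf_eq], ?_⟩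
  · exact Subgroup.zpowers_le.mpr (ramificationGroup_le_inertia pow_mem)
  obtain ⟨k, hk⟩ : ∃ k, (p - 1) * p ^ b = k + 1 := Nat.exists_eq_succ_of_ne_zero
    (Nat.mul_ne_zero (Nat.sub_ne_zero_of_lt hp.out.one_lt) (pow_ne_zero _ hp.out.ne_zero))
  have mul_eq : (p - 1) * p ^ (b + 1) = (k + 1) * p := by rw [← hk, pow_succ, mul_assoc]
  have lt : k * p < (p - 1) * p ^ (b + 1) := by
    rw [mul_eq]
    exact Nat.mul_lt_mul_of_pos_right k.lt_succ_self hp.out.pos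
  rw [mul_eq]
  refine pow_dvd_differentIdeal_fixedField_zpowers P p pow_mem orderOf_eq lt (lt.trans_le ?_)
  rw [hcard, pow_succ' p (b + 1)]
  exact Nat.mul_le_mul_right _ (Nat.sub_le _ _)

lemma pow_dvd_differentIdeal_of_isCyclic_inertia {L : Type u} [Field L] [NumberField L]
    [IsAbelianGalois ℚ L] {P : Ideal (𝓞 L)} [P.IsMaximal] [P.LiesOver (Ideal.span {(p : ℤ)})]
    (hcyc : IsCyclic (P.inertia Gal(L/ℚ))) {b : ℕ}
    (hcard : Nat.card (P.inertia Gal(L/ℚ)) = p ^ (b + 1)) :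
    P ^ ((b + 1) * ((p - 1) * p ^ b)) ∣ differentIdeal ℤ (𝓞 L) := by
  induction b generalizing L with
  | zero =>
    have dvd := pow_card_inertia_sub_one_dvd_differentIdeal P p
    rw [hcard] at dvd
    simpa using dvd
  | succ b ih =>
    have hP0 := ne_bot_of_liesOver P p
    obtain ⟨N, hN, card_N, dvd_top⟩ :=
      exists_pow_dvd_differentIdeal_fixedField_of_isCyclic_inertia hcyc hcard
    have idx_eq := (ramificationIdx_fixedField_eq_card hN).trans card_N
    have card_bot := card_inertia_fixedField_mul_card p hN
    have cyc_bot : IsCyclic ((P.under (𝓞 (fixedField N))).inertia Gal(fixedField N/ℚ)) :=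
      map_restrictNormalHom_inertia_eq p hN ▸
        isCyclic_of_surjective _ (MonoidHom.subgroupMap_surjective _ _)
    rw [card_N, hcard, pow_succ] at card_bot
    set K := fixedField N
    have : (P.under (𝓞 K)).IsMaximal := Ideal.IsMaximal.under _ P
    have : (P.under (𝓞 K)).LiesOver (Ideal.span {(p : ℤ)}) := Ideal.LiesOver.tower_bot P _ _
    have dvd_bot := pow_mul_ramificationIdx_dvd_map (P := P) hP0
      (ih cyc_bot (Nat.eq_of_mul_eq_mul_right hp.out.pos card_bot))
    have dvd_mul := mul_dvd_mul dvd_top dvd_bot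
    rw [← differentIdeal_eq_differentIdeal_mul_differentIdeal ℤ (𝓞 K) (𝓞 L), ← pow_add,
      idx_eq] at dvd_mul
    convert dvd_mul using 2
    ring

end CyclicInertia

/-! ### Inertia groups that are `p`-groups -/

section Breaks

open IntermediateField

variable {L : Type*} [Field L] [NumberField L] [IsAbelianGalois ℚ L] (P : Ideal (𝓞 L))
  [P.IsMaximal] (p : ℕ) [hp : Fact p.Prime] [P.LiesOver (Ideal.span {(p : ℤ)})]

lemma eq_one_of_mem_ramificationGroup_of_card_inertia_eq {i : ℕ}
    (hcard : Nat.card (P.inertia Gal(L/ℚ)) = p) (hi : p < (p - 1) * i) {s : Gal(L/ℚ)}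
    (hs : s ∈ ramificationGroup Gal(L/ℚ) P i) : s = 1 := by
  have natCast_mem_pow_iff := natCast_mem_pow_iff P p
  rw [hcard] at natCast_mem_pow_iff
  refine eq_one_of_pow_prime_eq_one hp.out ((natCast_mem_pow_iff p).mpr le_rfl)
    ((natCast_mem_pow_iff _).not.mpr (by lia)) hs hi ?_
  rw [← hcard]
  simpa using congrArg Subtype.val
    (pow_card_eq_one' (x := (⟨s, ramificationGroup_le_inertia hs⟩ : P.inertia Gal(L/ℚ))))

lemma hasPrimeQuotientBreaksLE {c : ℕ} (hc : p < (p - 1) * (c + 1)) :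
    HasPrimeQuotientBreaksLE Gal(L/ℚ) P p c := by
  intro H hH card_H σ _ hσH
  have card_bot := card_inertia_fixedField_mul_card p hH
  have idx_eq := ramificationIdx_fixedField_eq_card hH
  have ker_eq := restrictNormalHom_fixedField_ker H
  have smul_eq := algebraMap_restrictNormalHom_smul (fixedField H) σ
  set K := fixedField H
  have : (P.under (𝓞 K)).IsMaximal := Ideal.IsMaximal.under _ P
  have : (P.under (𝓞 K)).LiesOver (Ideal.span {(p : ℤ)}) := Ideal.LiesOver.tower_bot P _ _
  rw [← card_H, mul_comm] at card_bot
  have notMem : AlgEquiv.restrictNormalHom K σ ∉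
      ramificationGroup Gal(K/ℚ) (P.under (𝓞 K)) (c + 1) := fun hs ↦ by
    refine hσH ?_
    rw [← ker_eq]
    exact eq_one_of_mem_ramificationGroup_of_card_inertia_eq _ p
      (Nat.eq_of_mul_eq_mul_left Nat.card_pos card_bot) hc hs
  obtain ⟨z, hz⟩ := not_forall.mp notMem
  refine ⟨algebraMap (𝓞 K) (𝓞 L) z, fun h hh ↦ smul_algebraMap_ringOfIntegers_fixedField hh z,
    fun hmem ↦ hz ?_⟩
  rw [← smul_eq, ← map_sub, ← idx_eq] at hmem
  exact mem_under_pow_succ_of_algebraMap_mem_pow (ne_bot_of_liesOver P p) hmem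

end Breaks

section WildInertia

variable {L : Type*} [Field L] [NumberField L] [IsAbelianGalois ℚ L] {P : Ideal (𝓞 L)}
  [P.IsMaximal]

lemma isCyclic_inertia_of_isPGroup {p : ℕ} [hp : Fact p.Prime]
    [P.LiesOver (Ideal.span {(p : ℤ)})] (hp2 : p ≠ 2) (hI : IsPGroup p (P.inertia Gal(L/ℚ))) :
    IsCyclic (P.inertia Gal(L/ℚ)) := by
  have := hp.out.two_le
  obtain ⟨x, hx⟩ := exists_isInertialUniformizer (ne_bot_of_liesOver P p)
  exact hx.isCyclic_inertia_of_hasPrimeQuotientBreaksLE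
    (hasPrimeFixedResidueField_of_liesOver P p) hp.out hI
    (hasPrimeQuotientBreaksLE P p (by lia)) le_rfl (inertia_le_ramificationGroup_one hI)

lemma card_inertia_le_exponent_sq_of_isPGroup_two [P.LiesOver (Ideal.span {((2 : ℕ) : ℤ)})]
    (hI : IsPGroup 2 (P.inertia Gal(L/ℚ))) :
    Nat.card (P.inertia Gal(L/ℚ)) ≤ Monoid.exponent (P.inertia Gal(L/ℚ)) ^ 2 := by
  obtain ⟨x, hx⟩ := exists_isInertialUniformizer (ne_bot_of_liesOver P 2)
  exact hx.card_inertia_le_exponent_sq_of_hasPrimeQuotientBreaksLE_two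
    (hasPrimeFixedResidueField_of_liesOver P 2) (natCast_mem_of_liesOver P 2) hI
    (hasPrimeQuotientBreaksLE P 2 (by simp))

end WildInertia

/-! ### Discriminants -/

section Discriminant

open scoped Pointwise

variable {L : Type*} [Field L] [NumberField L] (p : ℕ) [hp : Fact p.Prime]

lemma inertia_le_inertia_smul {B G : Type*} [CommRing B] [Group G] [IsMulCommutative G]
    [MulSemiringAction G B] (P : Ideal B) (g : G) : P.inertia G ≤ (g • P).inertia G := by
  intro s hs y
  have conj : s • y - y = g • (s • g⁻¹ • y - g⁻¹ • y) := by
    rw [smul_sub, smul_inv_smul, ← mul_smul g s, mul_comm' g s, mul_smul, smul_inv_smul]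
  change s • y - y ∈ g • P
  rw [conj]
  exact Ideal.smul_mem_pointwise_smul _ _ _ (hs _)

lemma inertia_eq_of_liesOver [IsAbelianGalois ℚ L] (P Q : Ideal (𝓞 L)) [P.IsMaximal] [Q.IsMaximal]
    [P.LiesOver (Ideal.span {(p : ℤ)})] [Q.LiesOver (Ideal.span {(p : ℤ)})] :
    P.inertia Gal(L/ℚ) = Q.inertia Gal(L/ℚ) := by
  have := Int.ideal_span_isMaximal_of_prime p
  obtain ⟨g, rfl⟩ :=
    Ideal.exists_smul_eq_of_isGaloisGroup (Ideal.span {(p : ℤ)}) P Q Gal(L/ℚ)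
  refine le_antisymm (inertia_le_inertia_smul P g) ?_
  simpa only [inv_smul_smul] using inertia_le_inertia_smul (g • P) g⁻¹

lemma span_natCast_pow_dvd_differentIdeal_pow [IsAbelianGalois ℚ L] (P : Ideal (𝓞 L))
    [P.IsMaximal] [P.LiesOver (Ideal.span {(p : ℤ)})] {m : ℕ}
    (h : ∀ (Q : Ideal (𝓞 L)) [Q.IsMaximal] [Q.LiesOver (Ideal.span {(p : ℤ)})],
      Q ^ m ∣ differentIdeal ℤ (𝓞 L)) :
    Ideal.span {(p : 𝓞 L)} ^ m ∣ differentIdeal ℤ (𝓞 L) ^ Nat.card (P.inertia Gal(L/ℚ)) := by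
  have span_ne_bot : Ideal.span {(p : 𝓞 L)} ≠ ⊥ := by simpa using hp.out.ne_zero
  rw [UniqueFactorizationMonoid.dvd_iff_emultiplicity_le (pow_ne_zero _ span_ne_bot)]
  intro Q hQ
  have : Q.IsPrime := Ideal.isPrime_of_prime hQ
  have : Q.IsMaximal := Ideal.IsPrime.isMaximal ‹_› hQ.ne_zero
  rw [emultiplicity_pow hQ, emultiplicity_pow hQ]
  by_cases hpQ : (p : 𝓞 L) ∈ Q
  · have : Q.LiesOver (Ideal.span {(p : ℤ)}) :=
      (Ideal.liesOver_span_iff Ideal.IsPrime.ne_top' (Nat.prime_iff_prime_int.mp hp.out)).mpr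
        (by simpa using hpQ)
    have emultiplicity_span :
        emultiplicity Q (Ideal.span {(p : 𝓞 L)}) = Nat.card (P.inertia Gal(L/ℚ)) := by
      rw [emultiplicity_eq_coe, Ideal.dvd_span_singleton, Ideal.dvd_span_singleton,
        natCast_mem_pow_iff Q p, natCast_mem_pow_iff Q p, inertia_eq_of_liesOver p P Q]
      lia
    rw [emultiplicity_span, mul_comm]
    gcongr
    exact le_emultiplicity_of_pow_dvd (h Q)
  · rw [emultiplicity_eq_zero.mpr (by rwa [Ideal.dvd_span_singleton]), mul_zero]
    exact zero_le

lemma mul_finrank_le_card_inertia_mul_padicValNat_discr [IsAbelianGalois ℚ L] (P : Ideal (𝓞 L))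
    [P.IsMaximal] [P.LiesOver (Ideal.span {(p : ℤ)})] {m : ℕ}
    (h : ∀ (Q : Ideal (𝓞 L)) [Q.IsMaximal] [Q.LiesOver (Ideal.span {(p : ℤ)})],
      Q ^ m ∣ differentIdeal ℤ (𝓞 L)) :
    m * Module.finrank ℚ L ≤
      Nat.card (P.inertia Gal(L/ℚ)) * padicValNat p (discr L).natAbs := by
  have norm_dvd := map_dvd Ideal.absNorm (span_natCast_pow_dvd_differentIdeal_pow p P h)
  have discr_ne_zero : (discr L).natAbs ≠ 0 := Int.natAbs_ne_zero.mpr (discr_ne_zero L)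
  rwa [map_pow, map_pow, absNorm_differentIdeal L, Ideal.absNorm_span_natCast, ← pow_mul,
    RingOfIntegers.rank, padicValNat_dvd_iff_le (pow_ne_zero _ discr_ne_zero), padicValNat.pow,
    mul_comm] at norm_dvd

lemma finrank_mul_padicValNat_discr_le (K : Type*) [Field K] [NumberField K] [Algebra K L] :
    Module.finrank K L * padicValNat p (discr K).natAbs ≤ padicValNat p (discr L).natAbs := by
  rw [← padicValNat.pow, ← padicValNat_dvd_iff_le (Int.natAbs_ne_zero.mpr (discr_ne_zero L)),
    natAbs_discr_eq_absNorm_differentIdeal_mul_natAbs_discr_pow K (𝓞 K) L (𝓞 L)]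
  exact pow_padicValNat_dvd.mul_left _

variable {p} in
lemma mul_finrank_le_mul_padicValNat_discr_of_algebra (K : Type*) [Field K] [NumberField K]
    [Algebra K L] {e m : ℕ} (h : m * Module.finrank ℚ K ≤ e * padicValNat p (discr K).natAbs) :
    m * Module.finrank ℚ L ≤ e * padicValNat p (discr L).natAbs :=
  calc m * Module.finrank ℚ L = Module.finrank K L * (m * Module.finrank ℚ K) := by
        rw [← Module.finrank_mul_finrank ℚ K L]; ring
    _ ≤ Module.finrank K L * (e * padicValNat p (discr K).natAbs) := by gcongr
    _ = e * (Module.finrank K L * padicValNat p (discr K).natAbs) := by ring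
    _ ≤ e * padicValNat p (discr L).natAbs := by
      gcongr; exact finrank_mul_padicValNat_discr_le p K

end Discriminant

section LocalBound

open IntermediateField

lemma pow_le_pow_of_pred_mul_le {p e n v : ℕ} (he : e ≠ 0) (hep : e ≤ p)
    (h : (e - 1) * n ≤ e * v) : e ^ n ≤ p ^ (4 * v) := by
  obtain _ | _ | e := e
  · contradiction
  · simpa using Nat.one_le_pow _ _ hep
  · have : n ≤ 4 * v := by
      refine le_of_mul_le_mul_left (a := e + 1) ?_ e.succ_pos
      simp only [Nat.add_sub_cancel] at h
      nlinarith
    exact (Nat.pow_le_pow_left hep n).trans (Nat.pow_le_pow_right (by lia) this)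

lemma pow_le_pow_of_succ_mul_pred_mul_le {p b e n v : ℕ} (hp : 2 ≤ p) (he : e ≤ p ^ (2 * (b + 1)))
    (h : (b + 1) * ((p - 1) * p ^ b) * n ≤ p ^ (b + 1) * v) : e ^ n ≤ p ^ (4 * v) := by
  obtain ⟨q, rfl⟩ := Nat.exists_eq_add_of_le' hp
  have pred_mul_le : (q + 1) * ((b + 1) * n) ≤ (q + 2) * v := by
    refine le_of_mul_le_mul_left (a := (q + 2) ^ b) (le_of_eq_of_le ?_ (h.trans_eq ?_))
      (by positivity)
    · rw [show q + 2 - 1 = q + 1 from rfl]; ring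
    · ring
  have succ_mul_le : (b + 1) * n ≤ 2 * v :=
    le_of_mul_le_mul_left (a := q + 1) (by nlinarith) q.succ_pos
  calc e ^ n ≤ ((q + 2) ^ (2 * (b + 1))) ^ n := Nat.pow_le_pow_left he n
    _ = (q + 2) ^ (2 * ((b + 1) * n)) := by rw [← pow_mul, mul_assoc]
    _ ≤ (q + 2) ^ (4 * v) := Nat.pow_le_pow_right (by lia) (by lia)

variable {L : Type*} [Field L] [NumberField L] [IsAbelianGalois ℚ L] (P : Ideal (𝓞 L))
  [P.IsMaximal] (p : ℕ) [hp : Fact p.Prime] [P.LiesOver (Ideal.span {(p : ℤ)})]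

lemma isPGroup_inertia_fixedField_tameInertia :
    IsPGroup p ((P.under (𝓞 (fixedField (tameInertia Gal(L/ℚ) P p)))).inertia
      Gal(fixedField (tameInertia Gal(L/ℚ) P p)/ℚ)) := by
  rintro ⟨s, hs⟩
  have ker_eq := restrictNormalHom_fixedField_ker (tameInertia Gal(L/ℚ) P p)
  obtain ⟨s, hsI, rfl⟩ :=
    (map_restrictNormalHom_inertia_eq p (N := tameInertia Gal(L/ℚ) P p) inf_le_left).ge hs
  obtain ⟨x, hx⟩ := exists_isInertialUniformizer (ne_bot_of_liesOver P p)
  obtain ⟨k, hk⟩ := hx.exists_pow_mem_tameInertia (hasPrimeFixedResidueField_of_liesOver P p)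
    hp.out (natCast_mem_of_liesOver P p) hsI
  rw [← ker_eq, MonoidHom.mem_ker, map_pow] at hk
  exact ⟨k, Subtype.ext hk⟩

include p in
lemma isCyclic_inertia_fixedField_of_le_sup_zpowers {N : Subgroup Gal(L/ℚ)} {g : Gal(L/ℚ)}
    (hN : N ≤ P.inertia Gal(L/ℚ)) (hle : P.inertia Gal(L/ℚ) ≤ N ⊔ Subgroup.zpowers g) :
    IsCyclic ((P.under (𝓞 (fixedField N))).inertia Gal(fixedField N/ℚ)) := by
  have ker_eq := restrictNormalHom_fixedField_ker N
  refine Subgroup.isCyclic_of_le (H' := Subgroup.zpowers (AlgEquiv.restrictNormalHom _ g)) ?_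
  rw [← map_restrictNormalHom_inertia_eq p hN, ← MonoidHom.map_zpowers]
  refine (Subgroup.map_mono hle).trans ?_
  rw [Subgroup.map_sup, (Subgroup.map_eq_bot_iff N).mpr ker_eq.ge, bot_sup_eq]

variable {p} in
lemma mul_finrank_le_mul_padicValNat_discr_of_exponent_inertia_eq {b : ℕ}
    (hexp : Monoid.exponent (P.inertia Gal(L/ℚ)) = p ^ (b + 1)) :
    (b + 1) * ((p - 1) * p ^ b) * Module.finrank ℚ L ≤
      p ^ (b + 1) * padicValNat p (discr L).natAbs := by
  obtain ⟨N, hN, g, hle, relIndex_eq⟩ :=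
    exists_le_sup_zpowers_relIndex_eq_exponent (P.inertia Gal(L/ℚ))
  have card_mul := card_inertia_fixedField_mul_card p hN
  have cyclic := isCyclic_inertia_fixedField_of_le_sup_zpowers P p hN hle
  rw [← card_mul_relIndex_of_le hN, relIndex_eq, hexp, mul_comm] at card_mul
  have card_eq := Nat.eq_of_mul_eq_mul_left Nat.card_pos card_mul
  refine mul_finrank_le_mul_padicValNat_discr_of_algebra (fixedField N) ?_
  have : (P.under (𝓞 (fixedField N))).IsMaximal := Ideal.IsMaximal.under _ P
  have : (P.under (𝓞 (fixedField N))).LiesOver (Ideal.span {(p : ℤ)}) :=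
    Ideal.LiesOver.tower_bot P _ _
  rw [← card_eq]
  refine mul_finrank_le_card_inertia_mul_padicValNat_discr p _ fun Q _ _ ↦ ?_
  rw [inertia_eq_of_liesOver p _ Q] at card_eq cyclic
  exact pow_dvd_differentIdeal_of_isCyclic_inertia cyclic card_eq

variable {p P} in
lemma card_inertia_mul_pred_le_of_exponent_inertia_eq {b : ℕ}
    (hexp : Monoid.exponent (P.inertia Gal(L/ℚ)) = p ^ (b + 1)) :
    Nat.card (P.inertia Gal(L/ℚ)) * (p - 1) ≤ p ^ (2 * (b + 1)) := by
  have hI : IsPGroup p (P.inertia Gal(L/ℚ)) :=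
    fun g ↦ ⟨b + 1, hexp ▸ Monoid.pow_exponent_eq_one g⟩
  obtain rfl | hp2 := eq_or_ne p 2
  · rw [Nat.add_one_sub_one, mul_one, mul_comm, pow_mul, ← hexp]
    exact card_inertia_le_exponent_sq_of_isPGroup_two hI
  · have := isCyclic_inertia_of_isPGroup hp2 hI
    calc Nat.card (P.inertia Gal(L/ℚ)) * (p - 1) = p ^ (b + 1) * (p - 1) := by
          rw [← IsCyclic.exponent_eq_card, hexp]
      _ ≤ p ^ (b + 1) * p := by gcongr; exact Nat.sub_le _ _
      _ = p ^ (b + 2) := by ring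
      _ ≤ p ^ (2 * (b + 1)) := Nat.pow_le_pow_right hp.out.pos (by lia)

theorem card_inertia_pow_finrank_le :
    Nat.card (P.inertia Gal(L/ℚ)) ^ Module.finrank ℚ L ≤
      p ^ (4 * padicValNat p (discr L).natAbs) := by
  obtain ⟨x, hx⟩ := exists_isInertialUniformizer (ne_bot_of_liesOver P p)
  have card_tame_le := hx.card_tameInertia_le (hasPrimeFixedResidueField_of_liesOver P p)
    hp.out (natCast_mem_of_liesOver P p)
  have card_eq := card_inertia_fixedField_mul_card p (N := tameInertia Gal(L/ℚ) P p) inf_le_left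
  have isPGroup := isPGroup_inertia_fixedField_tameInertia P p
  have discr_le {e m : ℕ} := mul_finrank_le_mul_padicValNat_discr_of_algebra (L := L) (p := p)
    (e := e) (m := m) (fixedField (tameInertia Gal(L/ℚ) P p))
  set K := fixedField (tameInertia Gal(L/ℚ) P p)
  have : (P.under (𝓞 K)).IsMaximal := Ideal.IsMaximal.under _ P
  have : (P.under (𝓞 K)).LiesOver (Ideal.span {(p : ℤ)}) := Ideal.LiesOver.tower_bot P _ _
  obtain ⟨_ | b, hb⟩ := isPGroup.exists_exponent_eq_pow
  · have card_le : Nat.card (P.inertia Gal(L/ℚ)) ≤ p := by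
      have := Monoid.exp_eq_one_iff.mp hb
      rw [← card_eq, Nat.card_of_subsingleton 1, one_mul]
      exact card_tame_le.trans (Nat.sub_le _ _)
    refine pow_le_pow_of_pred_mul_le Nat.card_pos.ne' card_le
      (mul_finrank_le_card_inertia_mul_padicValNat_discr p P fun Q _ _ ↦ ?_)
    rw [inertia_eq_of_liesOver p P Q]
    exact pow_card_inertia_sub_one_dvd_differentIdeal Q p
  · refine pow_le_pow_of_succ_mul_pred_mul_le hp.out.two_le ?_
      (discr_le (mul_finrank_le_mul_padicValNat_discr_of_exponent_inertia_eq (P.under (𝓞 K)) hb))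
    rw [← card_eq]
    exact (Nat.mul_le_mul_left _ card_tame_le).trans
      (card_inertia_mul_pred_le_of_exponent_inertia_eq hb)

end LocalBound

section RootDiscriminant

open IntermediateField

lemma prod_primeFactors_pow_mul_padicValNat {n : ℕ} (hn : n ≠ 0) (k : ℕ) :
    ∏ p ∈ n.primeFactors, p ^ (k * padicValNat p n) = n ^ k := by
  conv_rhs =>
    rw [← Nat.prod_factorization_pow_eq_self hn, Nat.prod_factorization_eq_prod_primeFactors,
      ← Finset.prod_pow]
  refine Finset.prod_congr rfl fun p hp ↦ ?_
  rw [Nat.factorization_def _ (Nat.prime_of_mem_primeFactors hp), ← pow_mul, mul_comm]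

lemma exists_prime_liesOver_span {K : Type*} [Field K] [NumberField K] (P : Ideal (𝓞 K))
    [P.IsMaximal] : ∃ p : ℕ, p.Prime ∧ P.LiesOver (Ideal.span {(p : ℤ)}) :=
  have : NeZero P := ⟨Ideal.IsMaximal.ne_bot_of_isIntegral_int P⟩
  ⟨_, Nat.absNorm_under_prime P, Int.liesOver_span_absNorm P⟩

section

variable {L : Type*} [Field L] [NumberField L] [IsGalois ℚ L] {H : Subgroup Gal(L/ℚ)}

lemma ramificationIdx_under_fixedField_eq_one (Q : Ideal (𝓞 L)) [Q.IsMaximal]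
    (hQ : Q.inertia Gal(L/ℚ) ≤ H) : (Q.under (𝓞 (fixedField H))).ramificationIdx ℤ = 1 := by
  obtain ⟨p, hp, hpQ⟩ := exists_prime_liesOver_span Q
  have := Fact.mk hp
  have : (Q.under (𝓞 (fixedField H))).IsMaximal := Ideal.IsMaximal.under _ Q
  have card_eq : Nat.card (Q.inertia H) = Q.ramificationIdx (𝓞 (fixedField H)) := by
    rw [Ideal.card_inertia_eq_ramificationIdxIn (G := H) (Q.under (𝓞 (fixedField H))) Q,
      Ideal.ramificationIdxIn_eq_ramificationIdx (Q.under (𝓞 (fixedField H))) Q H]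
  have card_eq' : Nat.card (Q.inertia H) = Nat.card (Q.inertia Gal(L/ℚ)) :=
    Nat.card_congr ⟨fun s ↦ ⟨s.1.1, s.2⟩, fun s ↦ ⟨⟨s.1, hQ s.2⟩, s.2⟩, fun _ ↦ rfl, fun _ ↦ rfl⟩
  have tower : Q.ramificationIdx ℤ = (Q.under (𝓞 (fixedField H))).ramificationIdx ℤ *
      Q.ramificationIdx (𝓞 (fixedField H)) := Ideal.ramificationIdx_tower _ _
  rw [← card_eq, card_eq', ← card_inertia_eq_ramificationIdx Q p] at tower
  exact (Nat.eq_of_mul_eq_mul_right Nat.card_pos ((one_mul _).trans tower)).symm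

lemma eq_top_of_forall_inertia_le
    (hH : ∀ (Q : Ideal (𝓞 L)) [Q.IsMaximal], Q.inertia Gal(L/ℚ) ≤ H) : H = ⊤ := by
  have finrank_eq_one : Module.finrank ℚ (fixedField H) = 1 := by
    by_contra hne
    obtain ⟨P, _, ramified⟩ := exists_not_isUnramifiedAt_int (𝒪 := 𝓞 (fixedField H)) hne
    obtain ⟨Q, _, hQP⟩ := Ideal.exists_maximal_ideal_liesOver_of_isIntegral (S := 𝓞 L) P
    have ramificationIdx_eq := ramificationIdx_under_fixedField_eq_one Q (hH Q)
    rw [← Ideal.over_def Q P] at ramificationIdx_eq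
    have : Finite (ℤ ⧸ P.under ℤ) := Ideal.finiteQuotientOfFreeOfNeBot _
      (Ideal.IsMaximal.ne_bot_of_isIntegral_int P ∘ Ideal.eq_bot_of_comap_eq_bot)
    exact ramified (Ideal.ramificationIdx_eq_one_iff.mp ramificationIdx_eq)
  refine Subgroup.eq_top_of_card_eq _ ?_
  rw [IsGalois.card_aut_eq_finrank, ← Module.finrank_mul_finrank ℚ (fixedField H) L,
    finrank_eq_one, one_mul, finrank_fixedField_eq_card]

end

lemma card_finset_sup_le_prod_card {ι G : Type*} [Group G] [IsMulCommutative G] [Finite G]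
    (S : Finset ι) (I : ι → Subgroup G) :
    Nat.card (S.sup I : Subgroup G) ≤ ∏ i ∈ S, Nat.card (I i) := by
  classical
  induction S using Finset.induction_on with
  | empty => simp
  | insert i S hi ih =>
    rw [Finset.sup_insert, Finset.prod_insert hi]
    exact (card_le_card_mul_card_of_le_sup le_rfl).trans (Nat.mul_le_mul_left _ ih)

variable {L : Type*} [Field L] [NumberField L] [IsAbelianGalois ℚ L]

lemma inertia_eq_bot_of_not_dvd_discr {p : ℕ} [Fact p.Prime] (hpd : ¬ p ∣ (discr L).natAbs)
    (P : Ideal (𝓞 L)) [P.IsMaximal] [P.LiesOver (Ideal.span {(p : ℤ)})] :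
    P.inertia Gal(L/ℚ) = ⊥ := by
  have card_pow_le := card_inertia_pow_finrank_le P p
  rw [padicValNat.eq_zero_of_not_dvd hpd, mul_zero, pow_zero] at card_pow_le
  refine Subgroup.eq_bot_of_card_le _ ?_
  contrapose! card_pow_le
  exact Nat.one_lt_pow Module.finrank_pos.ne' card_pow_le

lemma finset_sup_inertia_eq_top {P : (discr L).natAbs.primeFactors → Ideal (𝓞 L)}
    (hmax : ∀ p, (P p).IsMaximal) (hover : ∀ p, (P p).LiesOver (Ideal.span {((p : ℕ) : ℤ)})) :
    Finset.univ.sup (fun p ↦ (P p).inertia Gal(L/ℚ)) = ⊤ := by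
  refine eq_top_of_forall_inertia_le fun Q _ ↦ ?_
  obtain ⟨p, hp, hpQ⟩ := exists_prime_liesOver_span Q
  have := Fact.mk hp
  by_cases hpd : p ∣ (discr L).natAbs
  · let q : (discr L).natAbs.primeFactors :=
      ⟨p, Nat.mem_primeFactors.mpr ⟨hp, hpd, Int.natAbs_ne_zero.mpr (discr_ne_zero L)⟩⟩
    have := hmax q
    have : (P q).LiesOver (Ideal.span {(p : ℤ)}) := hover q
    rw [← inertia_eq_of_liesOver p (P q) Q]
    exact Finset.le_sup (f := fun p ↦ (P p).inertia Gal(L/ℚ)) (Finset.mem_univ q)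
  · rw [inertia_eq_bot_of_not_dvd_discr hpd Q]
    exact bot_le

variable (L) in
theorem finrank_pow_finrank_le_natAbs_discr_pow_four :
    Module.finrank ℚ L ^ Module.finrank ℚ L ≤ (discr L).natAbs ^ 4 := by
  have fact_prime (p : (discr L).natAbs.primeFactors) : Fact (p : ℕ).Prime :=
    ⟨Nat.prime_of_mem_primeFactors p.2⟩
  have exists_over (p : (discr L).natAbs.primeFactors) : ∃ P : Ideal (𝓞 L),
      P.IsMaximal ∧ P.LiesOver (Ideal.span {((p : ℕ) : ℤ)}) :=
    have := Int.ideal_span_isMaximal_of_prime (p : ℕ)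
    Ideal.exists_maximal_ideal_liesOver_of_isIntegral _
  choose P hmax hover using exists_over
  have finrank_le : Module.finrank ℚ L ≤ ∏ p, Nat.card ((P p).inertia Gal(L/ℚ)) := by
    rw [← IsGalois.card_aut_eq_finrank, ← Subgroup.card_top,
      ← finset_sup_inertia_eq_top hmax hover]
    exact card_finset_sup_le_prod_card _ _
  calc Module.finrank ℚ L ^ Module.finrank ℚ L
      ≤ (∏ p, Nat.card ((P p).inertia Gal(L/ℚ))) ^ Module.finrank ℚ L :=
        Nat.pow_le_pow_left finrank_le _
    _ = ∏ p, Nat.card ((P p).inertia Gal(L/ℚ)) ^ Module.finrank ℚ L := by rw [Finset.prod_pow]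
    _ ≤ ∏ p : (discr L).natAbs.primeFactors, (p : ℕ) ^ (4 * padicValNat p (discr L).natAbs) :=
        Finset.prod_le_prod' fun p _ ↦ card_inertia_pow_finrank_le (P p) (p : ℕ)
    _ = (discr L).natAbs ^ 4 := by
        rw [Finset.prod_coe_sort _ fun p ↦ p ^ (4 * padicValNat p (discr L).natAbs)]
        exact prod_primeFactors_pow_mul_padicValNat (Int.natAbs_ne_zero.mpr (discr_ne_zero L)) 4

end RootDiscriminant

end AbelianRamification

theorem stmt_13_general (L : Type*) [Field L] [NumberField L] [IsAbelianGalois ℚ L] :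
    (Module.finrank ℚ L : ℝ) ^ (1 / 4 : ℝ) ≤ |(discr L : ℝ)| ^ ((Module.finrank ℚ L : ℝ)⁻¹) := by
  have finrank_ne_zero : (Module.finrank ℚ L : ℝ) ≠ 0 := by exact_mod_cast Module.finrank_pos.ne'
  have pow_le : (Module.finrank ℚ L : ℝ) ^ Module.finrank ℚ L ≤ |(discr L : ℝ)| ^ 4 := by
    rw [← Int.cast_abs, ← Nat.cast_natAbs]
    exact_mod_cast AbelianRamification.finrank_pow_finrank_le_natAbs_discr_pow_four L
  calc (Module.finrank ℚ L : ℝ) ^ (1 / 4 : ℝ)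
      = ((Module.finrank ℚ L : ℝ) ^ Module.finrank ℚ L) ^
          (1 / 4 * (Module.finrank ℚ L : ℝ)⁻¹) := by
        rw [← Real.rpow_natCast, ← Real.rpow_mul (by positivity)]
        field_simp
    _ ≤ (|(discr L : ℝ)| ^ 4) ^ (1 / 4 * (Module.finrank ℚ L : ℝ)⁻¹) := by gcongr
    _ = |(discr L : ℝ)| ^ ((Module.finrank ℚ L : ℝ)⁻¹) := by
        rw [← Real.rpow_natCast, ← Real.rpow_mul (by positivity), Nat.cast_ofNat]
        field_simp

/-- If `L/ℚ` is an abelian Galois extension with `[L:ℚ] = 2M²` for an integer `M > 1`,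
then the root discriminant satisfies `rd_L > ([L:ℚ]/2)^{1/4}`. -/
theorem stmt_13 (L : Type*) [Field L] [NumberField L] [IsGalois ℚ L]
    (habelian : ∀ σ τ : L ≃ₐ[ℚ] L, σ * τ = τ * σ)
    (M : ℕ) (hM : 1 < M) (hdeg : Module.finrank ℚ L = 2 * M ^ 2) :
    Real.exp ((1 / 4) * Real.log ((Module.finrank ℚ L : ℝ) / 2)) <
      (|(discr L : ℝ)|) ^ ((Module.finrank ℚ L : ℝ)⁻¹) := by
  have : IsAbelianGalois ℚ L := { toIsMulCommutative := .of_comm habelian }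
  have finrank_pos : (0 : ℝ) < Module.finrank ℚ L := by exact_mod_cast Module.finrank_pos
  refine lt_of_lt_of_le ?_ (stmt_13_general L)
  rw [mul_comm, ← Real.rpow_def_of_pos (half_pos finrank_pos)]
  exact Real.rpow_lt_rpow (by positivity) (half_lt_self finrank_pos) (by norm_num)
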